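/- arXiv:1410.1579 — 2 statements merged into one kernel-verified Lean document; each statement's English description precedes it below -/
import Mathlib

section
/- There exists a constant C > 0 such that for every n ∈ ℕ and every plane straight-line graph G on a set of n points in ℝ², the number of star-shaped polygons contained in G is at most C·n³·αⁿ, where α is the unique real root of x³ − x² − x − 1 = 0. -/
open scoped BigOperators

noncomputable section

/-- Points of the plane. -/
abbrev Pt : Type := ℝ × ℝ

/-- Dot product on the plane. -/
def dotp (a b : Pt) : ℝ := a.1 * b.1 + a.2 * b.2

/-- The geometric conditions making `(V, E)` a plane straight-line graph:
every edge joins two distinct points of `V`, no point of `V` lies in the open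
segment of an edge, and the open segments of two distinct edges are disjoint. -/
def ValidEdges (V : Finset Pt) (E : Finset (Sym2 Pt)) : Prop :=
  (∀ a b : Pt, s(a, b) ∈ E → a ∈ V ∧ b ∈ V ∧ a ≠ b) ∧
  (∀ a b : Pt, s(a, b) ∈ E → ∀ v ∈ V, v ∉ openSegment ℝ a b) ∧
  (∀ a b c d : Pt, s(a, b) ∈ E → s(c, d) ∈ E → s(a, b) ≠ s(c, d) →
    openSegment ℝ a b ∩ openSegment ℝ c d = ∅)

/-- A plane straight-line graph. -/
structure PSLG where
  V : Finset Pt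
  E : Finset (Sym2 Pt)
  valid : ValidEdges V E

/-- A path in `G`: a sequence of at least two vertices, consecutive ones joined by edges. -/
def IsPathIn (G : PSLG) (L : List Pt) : Prop :=
  2 ≤ L.length ∧ L.Chain' (fun a b => s(a, b) ∈ G.E)

/-- An x-monotone path: x-coordinates strictly increasing along the path. -/
def IsXMonotonePath (G : PSLG) (L : List Pt) : Prop :=
  IsPathIn G L ∧ L.Chain' (fun a b => a.1 < b.1)

/-- Monotonicity of a vertex sequence in direction `u`. -/
def MonotoneInDir (u : Pt) (L : List Pt) : Prop :=
  L.Chain' (fun a b => 0 < dotp (b - a) u)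

/-- A monotone path: monotone in some direction `u ≠ 0`. -/
def IsMonotonePath (G : PSLG) (L : List Pt) : Prop :=
  IsPathIn G L ∧ ∃ u : Pt, u ≠ 0 ∧ MonotoneInDir u L

/-- The number of x-monotone paths in `G`. -/
def xMonCount (G : PSLG) : ℕ := Set.ncard {L : List Pt | IsXMonotonePath G L}

/-- The number of monotone paths in `G`, a path and its reversal counted once. -/
def monPathCount (G : PSLG) : ℕ :=
  Set.ncard {P : Set (List Pt) | ∃ L, IsMonotonePath G L ∧ P = {L, L.reverse}}

/-- Consecutive pairs along a cycle (including the wrap-around pair). -/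
def cyclePairs (L : List Pt) : List (Pt × Pt) := L.zip (L.rotate 1)

/-- A cycle in `G`: at least 3 pairwise distinct vertices, cyclically joined by edges. -/
def IsCycleIn (G : PSLG) (L : List Pt) : Prop :=
  3 ≤ L.length ∧ L.Nodup ∧ ∀ p ∈ cyclePairs L, s(p.1, p.2) ∈ G.E

/-- The union of the closed edge segments of a cycle. -/
def cycleBody (L : List Pt) : Set Pt := ⋃ p ∈ cyclePairs L, segment ℝ p.1 p.2

/-- A star-shaped polygon in `G`: a cycle for which some point `o` sees the boundary
in exactly one point along every ray emanating from `o`. -/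
def IsStarShapedPolygon (G : PSLG) (L : List Pt) : Prop :=
  IsCycleIn G L ∧ ∃ o : Pt, ∀ d : Pt, d ≠ 0 →
    ∃! p : Pt, p ∈ cycleBody L ∧ ∃ t : ℝ, 0 ≤ t ∧ p = o + t • d

/-- The edge set of a cycle, used to count polygons. -/
def cycleEdgeSet (L : List Pt) : Finset (Sym2 Pt) :=
  ((cyclePairs L).map (fun p => s(p.1, p.2))).toFinset

/-- The number of star-shaped polygons in `G`, counted by edge sets. -/
def starCount (G : PSLG) : ℕ :=
  Set.ncard {E' : Finset (Sym2 Pt) | ∃ L, IsStarShapedPolygon G L ∧ E' = cycleEdgeSet L}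

/-- Cross product (signed area). -/
def crossp (a b : Pt) : ℝ := a.1 * b.2 - a.2 * b.1

/-- A convex polygon in `G`: a cycle whose vertices are in strictly convex position and
appear along the cycle in their convex-hull cyclic order; equivalently, for every directed
edge of the cycle all other vertices lie strictly on the same (left or right) side. -/
def IsConvexPolygon (G : PSLG) (L : List Pt) : Prop :=
  IsCycleIn G L ∧
  ((∀ p ∈ cyclePairs L, ∀ v ∈ L, v ≠ p.1 → v ≠ p.2 → 0 < crossp (p.2 - p.1) (v - p.1)) ∨
   (∀ p ∈ cyclePairs L, ∀ v ∈ L, v ≠ p.1 → v ≠ p.2 → crossp (p.2 - p.1) (v - p.1) < 0))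

/-- The number of convex polygons in `G`, counted by edge sets. -/
def convexCount (G : PSLG) : ℕ :=
  Set.ncard {E' : Finset (Sym2 Pt) | ∃ L, IsConvexPolygon G L ∧ E' = cycleEdgeSet L}

/-- A triangulation: an edge-maximal plane straight-line graph. -/
def PSLG.IsTriangulation (G : PSLG) : Prop :=
  ∀ a ∈ G.V, ∀ b ∈ G.V, a ≠ b → s(a, b) ∉ G.E → ¬ ValidEdges G.V (insert s(a, b) G.E)

/-- An orientation of a PSLG: each edge `{a, b}` receives exactly one of the ordered
pairs `(a, b)`, `(b, a)`. -/
def IsOrientation (G : PSLG) (D : Finset (Pt × Pt)) : Prop :=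
  (∀ p ∈ D, s(p.1, p.2) ∈ G.E) ∧
  ∀ a b : Pt, s(a, b) ∈ G.E →
    (((a, b) ∈ D ∧ (b, a) ∉ D) ∨ ((b, a) ∈ D ∧ (a, b) ∉ D))

/-- A directed simple path in a directed graph on points. -/
def IsDirPath (D : Finset (Pt × Pt)) (L : List Pt) : Prop :=
  2 ≤ L.length ∧ L.Nodup ∧ L.Chain' (fun a b => (a, b) ∈ D)

/-- The number of directed simple paths. -/
def dirPathCount (D : Finset (Pt × Pt)) : ℕ := Set.ncard {L : List Pt | IsDirPath D L}

/-- No three of the points of `S` are collinear. -/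
def NoThreeCollinear (S : Finset Pt) : Prop :=
  ∀ p ∈ S, ∀ q ∈ S, ∀ r ∈ S, p ≠ q → p ≠ r → q ≠ r → ¬ Collinear ℝ ({p, q, r} : Set Pt)

/-- A maximal monotone path: not a proper subpath (up to reversal) of another
monotone path of `G`. -/
def IsMaximalMonotonePath (G : PSLG) (L : List Pt) : Prop :=
  IsMonotonePath G L ∧ ∀ M : List Pt, IsMonotonePath G M →
    (L <:+: M ∨ L.reverse <:+: M) → (L = M ∨ L.reverse = M)

/-!
A star-shaped polygon is traversed counterclockwise around each of its centres, and as the centre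
moves within the set of points that see all its edges in their direction of traversal, the polygon
keeps winding once around it. Hence one centre may be fixed for each set of directed edges that is
the set of counterclockwise ones as seen from some point. A planar graph has `O(n)` edges, and the
signed area seen from `o` is affine in `o`, so these sets have Vapnik–Chervonenkis dimension at most
two and there are `O(n²)` of them.

In polar coordinates around a fixed centre, the polygon is one of `O(n)` edges crossing the
horizontal ray to the left, together with a path that is monotone in a plane drawing all of whose
edges run from left to right. In such a drawing each pair of consecutive arcs leaving a vertex
encloses a wedge with a leftmost vertex, and no vertex is the tip of more than two wedges, so that
the sum of all out-degrees is at most `3n`. The number of paths with a given last vertex is then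
bounded by adding the vertices from right to left: a vertex of out-degree `d` multiplies a
potential by a factor exponential in `d` that equals `α` for `d = 3`.
-/

/-! ### The potential function -/

/-- The bound, up to a common factor, on the number of directed paths leaving a set of `m` vertices
in a drawing; the values are chosen to satisfy `sumBound_add_sumBound_le`, which is an equality
for `d = 3` and `m ≤ 3`. -/
def sumBound (α : ℝ) : ℕ → ℝ
  | 0 => 0
  | 1 => α
  | 2 => α + 1
  | 3 => α ^ 2
  | 4 => 2 * α
  | 5 => 4
  | _ + 6 => 8 / α

/-- The factor by which a vertex of out-degree `d` increases the number of paths. It is exponential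
in `d`, so that only the sum of the out-degrees matters, and equals `α` at `d = 3`. -/
def degreeWeight (α : ℝ) (d : ℕ) : ℝ := α ^ 4 / 8 * (2 / α) ^ d

section Potential

variable {α : ℝ}

theorem tribonacci_bounds (h3 : α ^ 3 = α ^ 2 + α + 1) : 1.839 < α ∧ α < 1.8393 := by
  have hpos : 0 < α := by
    by_contra! h
    nlinarith [sq_nonneg (α + 1), sq_nonneg α]
  constructor <;> by_contra! h
  · nlinarith [mul_nonneg (sub_nonneg.2 h) hpos.le, sq_nonneg α]
  · nlinarith [mul_nonneg (sub_nonneg.2 h) hpos.le, sq_nonneg α]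

theorem sumBound_min_six (α : ℝ) : ∀ m, sumBound α (min m 6) = sumBound α m
  | 0 | 1 | 2 | 3 | 4 | 5 => rfl
  | m + 6 => by rw [min_eq_right (by omega)]; rfl

theorem sumBound_min_six_add_one (α : ℝ) : ∀ m, sumBound α (min m 6 + 1) = sumBound α (m + 1)
  | 0 | 1 | 2 | 3 | 4 | 5 => rfl
  | m + 6 => by rw [min_eq_right (by omega)]; rfl

theorem sumBound_nonneg (h0 : 0 ≤ α) : ∀ m, 0 ≤ sumBound α m
  | 0 | 1 | 2 | 3 | 4 | 5 | _ + 6 => by simp only [sumBound]; positivity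

theorem one_le_sumBound_add_one (h1 : 1 ≤ α) (h2 : α ≤ 2) : ∀ m, 1 ≤ sumBound α (m + 1)
  | 0 | 1 | 2 | 3 | 4 => by simp only [sumBound]; nlinarith
  | _ + 5 => by
    rw [sumBound, one_le_div₀ (by linarith)]
    linarith

theorem degreeWeight_mono (h0 : 0 < α) (h2 : α ≤ 2) : Monotone (degreeWeight α) := by
  intro d e hde
  unfold degreeWeight
  gcongr
  exact (one_le_div₀ h0).2 h2

theorem one_le_degreeWeight (h3 : α ^ 3 = α ^ 2 + α + 1) (d : ℕ) : 1 ≤ degreeWeight α d := by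
  obtain ⟨hl, hu⟩ := tribonacci_bounds h3
  refine le_trans ?_ (degreeWeight_mono (by linarith) (by linarith) d.zero_le)
  rw [degreeWeight, pow_zero, mul_one]
  nlinarith

theorem sumBound_add_sumBound_le (h3 : α ^ 3 = α ^ 2 + α + 1) (d m : ℕ) :
    sumBound α d + sumBound α m ≤ degreeWeight α d * sumBound α (m + 1) := by
  obtain ⟨hl, hu⟩ := tribonacci_bounds h3
  have h0 : 0 < α := by linarith
  have hsq : 3.3819 < α ^ 2 ∧ α ^ 2 < 3.3831 := by constructor <;> nlinarith
  wlog hdm : d ≤ 6 ∧ m ≤ 6 generalizing d m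
  · calc
      _ = sumBound α (min d 6) + sumBound α (min m 6) := by simp only [sumBound_min_six]
      _ ≤ degreeWeight α (min d 6) * sumBound α (min m 6 + 1) :=
        this _ _ ⟨min_le_right _ _, min_le_right _ _⟩
      _ ≤ _ := by
        rw [sumBound_min_six_add_one]
        exact mul_le_mul_of_nonneg_right
          (degreeWeight_mono h0 (by linarith) (min_le_left d 6)) (sumBound_nonneg h0.le _)
  obtain ⟨hd, hm⟩ := hdm
  interval_cases d <;> interval_cases m <;> simp only [sumBound, degreeWeight] <;> field_simp <;>
    nlinarith

theorem prod_degreeWeight_le {ι : Type*} (h0 : 0 < α) (h2 : α ≤ 2) {V : Finset ι} {d : ι → ℕ}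
    (hd : ∑ v ∈ V, d v ≤ 3 * V.card) : ∏ v ∈ V, degreeWeight α (d v) ≤ α ^ V.card := by
  calc
    _ = (α ^ 4 / 8) ^ V.card * (2 / α) ^ ∑ v ∈ V, d v := by
      simp only [degreeWeight, Finset.prod_mul_distrib, Finset.prod_const,
        Finset.prod_pow_eq_pow_sum]
    _ ≤ (α ^ 4 / 8) ^ V.card * (2 / α) ^ (3 * V.card) := by
      gcongr
      exact (one_le_div₀ h0).2 h2
    _ = α ^ V.card := by
      rw [pow_mul, ← mul_pow]
      congr 1
      field_simp
      norm_num

end Potential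

/-! ### Monotone drawings -/

/-- A plane drawing of a finite directed graph in which every arc runs from left to right and is
the graph of a continuous function over the interval spanned by its endpoints. Only the values of
`curve u v` on that interval matter. -/
structure MonotoneDrawing (ι : Type*) where
  V : Finset ι
  pos : ι → ℝ
  height : ι → ℝ
  Adj : ι → ι → Prop
  curve : ι → ι → ℝ → ℝ
  left_mem : ∀ {u v}, Adj u v → u ∈ V
  right_mem : ∀ {u v}, Adj u v → v ∈ V
  pos_injOn : Set.InjOn pos V
  pos_lt : ∀ {u v}, Adj u v → pos u < pos v
  continuous_curve : ∀ {u v}, Adj u v → Continuous (curve u v)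
  curve_left : ∀ {u v}, Adj u v → curve u v (pos u) = height u
  curve_right : ∀ {u v}, Adj u v → curve u v (pos v) = height v
  curve_ne_height : ∀ {u v w}, Adj u v → w ∈ V → pos u < pos w → pos w < pos v →
    curve u v (pos w) ≠ height w
  eq_or_of_curve_eq : ∀ {u v u' v' t}, Adj u v → Adj u' v' → t ∈ Set.Icc (pos u) (pos v) →
    t ∈ Set.Icc (pos u') (pos v') → curve u v t = curve u' v' t →
    (u = u' ∧ v = v') ∨ ∃ w, t = pos w ∧ (w = u ∨ w = v) ∧ (w = u' ∨ w = v')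

namespace MonotoneDrawing

variable {ι : Type*} (D : MonotoneDrawing ι)

open scoped Classical in
/-- The out-neighbours of a vertex. -/
def out (u : ι) : Finset ι := D.V.filter (D.Adj u)

theorem mem_out {u v : ι} : v ∈ D.out u ↔ D.Adj u v := by
  simpa [out] using fun h => D.right_mem h

/-- The leftmost position of an out-neighbour, with the junk value `0` if there is none. -/
def firstPos (u : ι) : ℝ := if h : (D.out u).Nonempty then (D.out u).inf' h D.pos else 0

/-- The height at which the arc from `u` to `v` passes the leftmost out-neighbour of `u`. It orders
the arcs leaving `u` from bottom to top. -/
def initialHeight (u v : ι) : ℝ := D.curve u v (D.firstPos u)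

variable {D}

theorem firstPos_mem_Ioc {u v : ι} (h : D.Adj u v) :
    D.firstPos u ∈ Set.Ioc (D.pos u) (D.pos v) := by
  have hne : (D.out u).Nonempty := ⟨v, D.mem_out.2 h⟩
  rw [firstPos, dif_pos hne]
  exact ⟨(Finset.lt_inf'_iff hne).2 fun w hw => D.pos_lt (D.mem_out.1 hw),
    Finset.inf'_le _ (D.mem_out.2 h)⟩

theorem eq_of_curve_eq {u v u' v' : ι} {t : ℝ} (h : D.Adj u v) (h' : D.Adj u' v')
    (ht : t ∈ Set.Ioc (D.pos u) (D.pos v)) (ht' : t ∈ Set.Ioc (D.pos u') (D.pos v'))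
    (heq : D.curve u v t = D.curve u' v' t) : v = v' ∧ (u = u' ∨ t = D.pos v) := by
  rcases D.eq_or_of_curve_eq h h' (Set.Ioc_subset_Icc_self ht) (Set.Ioc_subset_Icc_self ht') heq
    with ⟨hu, hv⟩ | ⟨w, rfl, rfl | rfl, rfl | rfl⟩
  · exact ⟨hv, .inl hu⟩
  · exact absurd ht.1 (lt_irrefl _)
  · exact absurd ht.1 (lt_irrefl _)
  · exact absurd ht'.1 (lt_irrefl _)
  · exact ⟨rfl, .inr rfl⟩

theorem curve_ne_of_mem_Ioo {u v u' v' : ι} {t x y : ℝ} (h : D.Adj u v) (h' : D.Adj u' v')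
    (ht : t ∈ Set.Icc (D.pos u) (D.pos v)) (ht' : t ∈ Set.Icc (D.pos u') (D.pos v'))
    (hx : x ∈ Set.Icc (D.pos u) (D.pos v)) (hx' : x ∈ Set.Icc (D.pos u') (D.pos v'))
    (hne : D.curve u v t ≠ D.curve u' v' t) (hy : y ∈ Set.Ioo (min t x) (max t x)) :
    D.curve u v y ≠ D.curve u' v' y := by
  intro heq
  have hy_mem : ∀ {a b : ℝ}, t ∈ Set.Icc a b → x ∈ Set.Icc a b → y ∈ Set.Ioo a b :=
    fun ht hx => ⟨(le_min ht.1 hx.1).trans_lt hy.1, hy.2.trans_le (max_le ht.2 hx.2)⟩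
  have hyuv := hy_mem ht hx
  rcases D.eq_or_of_curve_eq h h' (Set.Ioo_subset_Icc_self hyuv)
    (Set.Ioo_subset_Icc_self (hy_mem ht' hx')) heq with ⟨rfl, rfl⟩ | ⟨w, rfl, rfl | rfl, -⟩
  · exact hne rfl
  · exact lt_irrefl _ hyuv.1
  · exact lt_irrefl _ hyuv.2

theorem curve_le_of_curve_lt {u v u' v' : ι} {t x : ℝ} (h : D.Adj u v) (h' : D.Adj u' v')
    (ht : t ∈ Set.Icc (D.pos u) (D.pos v)) (ht' : t ∈ Set.Icc (D.pos u') (D.pos v'))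
    (hx : x ∈ Set.Icc (D.pos u) (D.pos v)) (hx' : x ∈ Set.Icc (D.pos u') (D.pos v'))
    (hlt : D.curve u v t < D.curve u' v' t) : D.curve u v x ≤ D.curve u' v' x := by
  by_contra! hgt
  obtain ⟨y, hy, heq⟩ := (isPreconnected_uIcc (a := t) (b := x)).intermediate_value₂
    Set.left_mem_uIcc Set.right_mem_uIcc (D.continuous_curve h).continuousOn
    (D.continuous_curve h').continuousOn hlt.le hgt.le
  have hyt : y ≠ t := by rintro rfl; exact hlt.ne heq
  have hyx : y ≠ x := by rintro rfl; exact hgt.ne' heq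
  refine curve_ne_of_mem_Ioo h h' ht ht' hx hx' hlt.ne ⟨hy.1.lt_of_ne ?_, hy.2.lt_of_ne ?_⟩ heq
  · rcases min_choice t x with h | h <;> rw [h] <;> [exact hyt.symm; exact hyx.symm]
  · rcases max_choice t x with h | h <;> rw [h] <;> assumption

theorem curve_lt_of_curve_lt {u v v' : ι} {t x : ℝ} (h : D.Adj u v) (h' : D.Adj u v')
    (ht : t ∈ Set.Ioc (D.pos u) (D.pos v)) (ht' : t ∈ Set.Ioc (D.pos u) (D.pos v'))
    (hx : x ∈ Set.Ioc (D.pos u) (D.pos v)) (hx' : x ∈ Set.Ioc (D.pos u) (D.pos v'))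
    (hlt : D.curve u v t < D.curve u v' t) : D.curve u v x < D.curve u v' x := by
  refine (curve_le_of_curve_lt h h' (Set.Ioc_subset_Icc_self ht) (Set.Ioc_subset_Icc_self ht')
    (Set.Ioc_subset_Icc_self hx) (Set.Ioc_subset_Icc_self hx') hlt).lt_of_ne fun heq => ?_
  obtain ⟨rfl, -⟩ := eq_of_curve_eq h h' hx hx' heq
  exact lt_irrefl _ hlt

theorem initialHeight_injective {u v v' : ι} (h : D.Adj u v) (h' : D.Adj u v')
    (heq : D.initialHeight u v = D.initialHeight u v') : v = v' :=
  (eq_of_curve_eq h h' (firstPos_mem_Ioc h) (firstPos_mem_Ioc h') heq).1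

theorem initialHeight_lt_iff {u v v' : ι} {x : ℝ} (h : D.Adj u v) (h' : D.Adj u v')
    (hx : x ∈ Set.Ioc (D.pos u) (D.pos v)) (hx' : x ∈ Set.Ioc (D.pos u) (D.pos v')) :
    D.initialHeight u v < D.initialHeight u v' ↔ D.curve u v x < D.curve u v' x :=
  ⟨curve_lt_of_curve_lt h h' (firstPos_mem_Ioc h) (firstPos_mem_Ioc h') hx hx',
    curve_lt_of_curve_lt h h' hx hx' (firstPos_mem_Ioc h) (firstPos_mem_Ioc h')⟩

variable (D)

/-- Two arcs leaving `u`, the one to `v'` next above the one to `v`. -/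
structure Wedge (u v v' : ι) : Prop where
  lower : D.Adj u v
  upper : D.Adj u v'
  initialHeight_lt : D.initialHeight u v < D.initialHeight u v'
  not_between : ∀ y, D.Adj u y → D.initialHeight u v < D.initialHeight u y →
    ¬ D.initialHeight u y < D.initialHeight u v'

/-- The vertex `w` lies in the closed region between two arcs leaving `u`, cut off at the first of
their right endpoints. -/
structure InWedge (u v v' w : ι) : Prop where
  mem : w ∈ D.V
  mem_lower : D.pos w ∈ Set.Ioc (D.pos u) (D.pos v)
  mem_upper : D.pos w ∈ Set.Ioc (D.pos u) (D.pos v')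
  lower_le : D.curve u v (D.pos w) ≤ D.height w
  le_upper : D.height w ≤ D.curve u v' (D.pos w)

/-- The vertex `w` is the leftmost one in the region between two arcs. -/
structure IsTip (u v v' w : ι) : Prop extends D.InWedge u v v' w where
  le_pos : ∀ y, D.InWedge u v v' y → D.pos w ≤ D.pos y

variable {D}

theorem Wedge.curve_lt {u v v' : ι} {x : ℝ} (h : D.Wedge u v v')
    (hx : x ∈ Set.Ioc (D.pos u) (D.pos v)) (hx' : x ∈ Set.Ioc (D.pos u) (D.pos v')) :
    D.curve u v x < D.curve u v' x :=
  (initialHeight_lt_iff h.lower h.upper hx hx').1 h.initialHeight_lt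

theorem Wedge.exists_isTip {u v v' : ι} (h : D.Wedge u v v') : ∃ w, D.IsTip u v v' w := by
  classical
  have hne : (D.V.filter (D.InWedge u v v')).Nonempty := by
    have hu := D.pos_lt h.lower
    have hu' := D.pos_lt h.upper
    rcases le_total (D.pos v) (D.pos v') with hv | hv
    · refine ⟨v, Finset.mem_filter.2 ⟨D.right_mem h.lower, D.right_mem h.lower, ⟨hu, le_rfl⟩,
        ⟨hu, hv⟩, (D.curve_right h.lower).le, ?_⟩⟩
      rw [← D.curve_right h.lower]
      exact (h.curve_lt ⟨hu, le_rfl⟩ ⟨hu, hv⟩).le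
    · refine ⟨v', Finset.mem_filter.2 ⟨D.right_mem h.upper, D.right_mem h.upper, ⟨hu', hv⟩,
        ⟨hu', le_rfl⟩, ?_, (D.curve_right h.upper).ge⟩⟩
      rw [← D.curve_right h.upper]
      exact (h.curve_lt ⟨hu', hv⟩ ⟨hu', le_rfl⟩).le
  obtain ⟨w, hw, hmin⟩ := Finset.exists_min_image _ D.pos hne
  exact ⟨w, (Finset.mem_filter.1 hw).2, fun y hy => hmin y (Finset.mem_filter.2 ⟨hy.mem, hy⟩)⟩

/- Otherwise the first upper arc runs between the two arcs of the second wedge. Followed to the left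
it can neither leave the wedge nor pass through `u₂`, and it cannot start at `u₂` because the arcs
of a wedge are consecutive; so it starts inside the wedge, to the left of the tip. -/
theorem IsTip.not_upper_lt {u₁ v₁ v₁' u₂ v₂ v₂' w : ι} (h₁ : D.Wedge u₁ v₁ v₁')
    (t₁ : D.IsTip u₁ v₁ v₁' w) (h₂ : D.Wedge u₂ v₂ v₂') (t₂ : D.IsTip u₂ v₂ v₂' w)
    (hw : D.height w < D.curve u₁ v₁' (D.pos w)) :
    ¬ D.curve u₁ v₁' (D.pos w) < D.curve u₂ v₂' (D.pos w) := by
  intro hlt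
  have hlow : D.curve u₂ v₂ (D.pos w) < D.curve u₁ v₁' (D.pos w) := t₂.lower_le.trans_lt hw
  have between : ∀ x ≤ D.pos w, D.pos u₁ ≤ x → D.pos u₂ ≤ x →
      D.curve u₂ v₂ x ≤ D.curve u₁ v₁' x ∧ D.curve u₁ v₁' x ≤ D.curve u₂ v₂' x := by
    intro x hxw hx₁ hx₂
    have hx : x ∈ Set.Icc (D.pos u₁) (D.pos v₁') := ⟨hx₁, hxw.trans t₁.mem_upper.2⟩
    have hw₁ := Set.Ioc_subset_Icc_self t₁.mem_upper
    exact ⟨curve_le_of_curve_lt h₂.lower h₁.upper (Set.Ioc_subset_Icc_self t₂.mem_lower) hw₁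
        ⟨hx₂, hxw.trans t₂.mem_lower.2⟩ hx hlow,
      curve_le_of_curve_lt h₁.upper h₂.upper hw₁ (Set.Ioc_subset_Icc_self t₂.mem_upper) hx
        ⟨hx₂, hxw.trans t₂.mem_upper.2⟩ hlt⟩
  rcases lt_trichotomy (D.pos u₁) (D.pos u₂) with hu | hu | hu
  · have hu₂ := between (D.pos u₂) t₂.mem_lower.1.le hu.le le_rfl
    rw [D.curve_left h₂.lower, D.curve_left h₂.upper] at hu₂
    exact D.curve_ne_height h₁.upper (D.left_mem h₂.lower) hu
      (t₂.mem_lower.1.trans_le t₁.mem_upper.2) (le_antisymm hu₂.2 hu₂.1)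
  · obtain rfl := D.pos_injOn (D.left_mem h₁.lower) (D.left_mem h₂.lower) hu
    exact h₂.not_between v₁' h₁.upper
      ((initialHeight_lt_iff h₂.lower h₁.upper t₂.mem_lower t₁.mem_upper).2 hlow)
      ((initialHeight_lt_iff h₁.upper h₂.upper t₁.mem_upper t₂.mem_upper).2 hlt)
  · have hu₁ := between (D.pos u₁) t₁.mem_lower.1.le le_rfl hu.le
    rw [D.curve_left h₁.upper] at hu₁
    refine (t₂.le_pos u₁ ?_).not_gt t₁.mem_lower.1
    exact ⟨D.left_mem h₁.lower, ⟨hu, t₁.mem_lower.1.le.trans t₂.mem_lower.2⟩,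
      ⟨hu, t₁.mem_lower.1.le.trans t₂.mem_upper.2⟩, hu₁.1, hu₁.2⟩

theorem IsTip.eq_of_lt_upper {u₁ v₁ v₁' u₂ v₂ v₂' w : ι} (h₁ : D.Wedge u₁ v₁ v₁')
    (t₁ : D.IsTip u₁ v₁ v₁' w) (h₂ : D.Wedge u₂ v₂ v₂') (t₂ : D.IsTip u₂ v₂ v₂' w)
    (hw₁ : D.height w < D.curve u₁ v₁' (D.pos w)) (hw₂ : D.height w < D.curve u₂ v₂' (D.pos w)) :
    u₁ = u₂ ∧ v₁' = v₂' := by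
  have heq : D.curve u₁ v₁' (D.pos w) = D.curve u₂ v₂' (D.pos w) :=
    le_antisymm (not_lt.1 (t₂.not_upper_lt h₂ h₁ t₁ hw₂)) (not_lt.1 (t₁.not_upper_lt h₁ h₂ t₂ hw₁))
  obtain ⟨hv, hu | hw⟩ := eq_of_curve_eq h₁.upper h₂.upper t₁.mem_upper t₂.mem_upper heq
  · exact ⟨hu, hv⟩
  · obtain rfl := D.pos_injOn t₁.mem (D.right_mem h₁.upper) hw
    exact absurd (D.curve_right h₁.upper) hw₁.ne'

variable (D)

/-- The drawing reflected in a horizontal axis. -/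
def reflect : MonotoneDrawing ι where
  V := D.V
  pos := D.pos
  height w := -D.height w
  Adj := D.Adj
  curve u v t := -D.curve u v t
  left_mem := D.left_mem
  right_mem := D.right_mem
  pos_injOn := D.pos_injOn
  pos_lt := D.pos_lt
  continuous_curve h := (D.continuous_curve h).neg
  curve_left h := congrArg Neg.neg (D.curve_left h)
  curve_right h := congrArg Neg.neg (D.curve_right h)
  curve_ne_height h hw hu hv := neg_injective.ne (D.curve_ne_height h hw hu hv)
  eq_or_of_curve_eq h h' ht ht' heq := D.eq_or_of_curve_eq h h' ht ht' (neg_injective heq)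

variable {D}

theorem Wedge.reflect {u v v' : ι} (h : D.Wedge u v v') : D.reflect.Wedge u v' v where
  lower := h.upper
  upper := h.lower
  initialHeight_lt := neg_lt_neg h.initialHeight_lt
  not_between y hy hv' hv := h.not_between y hy (neg_lt_neg_iff.1 hv) (neg_lt_neg_iff.1 hv')

theorem inWedge_reflect {u v v' w : ι} : D.reflect.InWedge u v' v w ↔ D.InWedge u v v' w :=
  ⟨fun h => ⟨h.mem, h.mem_upper, h.mem_lower, neg_le_neg_iff.1 h.le_upper,
    neg_le_neg_iff.1 h.lower_le⟩,
  fun h => ⟨h.mem, h.mem_upper, h.mem_lower, neg_le_neg h.le_upper, neg_le_neg h.lower_le⟩⟩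

theorem IsTip.reflect {u v v' w : ι} (h : D.IsTip u v v' w) : D.reflect.IsTip u v' v w :=
  ⟨inWedge_reflect.2 h.toInWedge, fun y hy => h.le_pos y (inWedge_reflect.1 hy)⟩

theorem IsTip.eq_of_lower_lt {u₁ v₁ v₁' u₂ v₂ v₂' w : ι} (h₁ : D.Wedge u₁ v₁ v₁')
    (t₁ : D.IsTip u₁ v₁ v₁' w) (h₂ : D.Wedge u₂ v₂ v₂') (t₂ : D.IsTip u₂ v₂ v₂' w)
    (hw₁ : D.curve u₁ v₁ (D.pos w) < D.height w) (hw₂ : D.curve u₂ v₂ (D.pos w) < D.height w) :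
    u₁ = u₂ ∧ v₁ = v₂ :=
  t₁.reflect.eq_of_lt_upper h₁.reflect h₂.reflect t₂.reflect (neg_lt_neg hw₁) (neg_lt_neg hw₂)

theorem Wedge.lower_unique {u v₁ v₂ v' : ι} (h₁ : D.Wedge u v₁ v') (h₂ : D.Wedge u v₂ v') :
    v₁ = v₂ := by
  rcases lt_trichotomy (D.initialHeight u v₁) (D.initialHeight u v₂) with h | h | h
  · exact absurd h₂.initialHeight_lt (h₁.not_between _ h₂.lower h)
  · exact initialHeight_injective h₁.lower h₂.lower h
  · exact absurd h₁.initialHeight_lt (h₂.not_between _ h₁.lower h)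

theorem exists_wedge {u v v' : ι} (h : D.Adj u v) (h' : D.Adj u v')
    (hlt : D.initialHeight u v < D.initialHeight u v') : ∃ y, D.Wedge u v y := by
  classical
  obtain ⟨y, hy, hmin⟩ := Finset.exists_min_image
    ((D.out u).filter fun y => D.initialHeight u v < D.initialHeight u y) (D.initialHeight u)
    ⟨v', Finset.mem_filter.2 ⟨D.mem_out.2 h', hlt⟩⟩
  rw [Finset.mem_filter, mem_out] at hy
  exact ⟨y, h, hy.1, hy.2, fun z hz hvz =>
    (hmin z (Finset.mem_filter.2 ⟨D.mem_out.2 hz, hvz⟩)).not_gt⟩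

variable (D)

open scoped Classical in
/-- The out-neighbours of `u` along all arcs but the uppermost one. -/
def nonTop (u : ι) : Finset ι :=
  (D.out u).filter fun v => ∃ v', D.Adj u v' ∧ D.initialHeight u v < D.initialHeight u v'

theorem card_out_le (u : ι) : (D.out u).card ≤ 1 + (D.nonTop u).card := by
  classical
  rw [nonTop, ← Finset.card_filter_add_card_filter_not (s := D.out u)
    (fun v => ∃ v', D.Adj u v' ∧ D.initialHeight u v < D.initialHeight u v'), add_comm]
  refine Nat.add_le_add_right (Finset.card_le_one.2 fun a ha b hb => ?_) _
  simp only [Finset.mem_filter, mem_out, not_exists, not_and, not_lt] at ha hb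
  exact initialHeight_injective ha.1 hb.1 (le_antisymm (hb.2 a ha.1) (ha.2 b hb.1))

/- Each wedge is charged to its tip, with a mark telling whether the tip lies strictly below the
upper arc; a tip with a given mark is charged at most once. -/
theorem sum_card_nonTop_le : ∑ u ∈ D.V, (D.nonTop u).card ≤ 2 * D.V.card := by
  classical
  rw [← Finset.card_sigma, mul_comm, ← Fintype.card_bool, ← Finset.card_univ (α := Bool),
    ← Finset.card_product]
  refine Finset.card_le_card_of_forall_subsingleton (fun p q => ∃ v', D.Wedge p.1 p.2 v' ∧
    D.IsTip p.1 p.2 v' q.1 ∧ (q.2 = true → D.height q.1 < D.curve p.1 v' (D.pos q.1)) ∧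
    (q.2 = false → D.curve p.1 p.2 (D.pos q.1) < D.height q.1)) ?_ ?_
  · rintro ⟨u, v⟩ huv
    simp only [Finset.mem_sigma, nonTop, Finset.mem_filter, mem_out] at huv
    obtain ⟨-, huv, v', huv', hlt⟩ := huv
    obtain ⟨y, hy⟩ := exists_wedge huv huv' hlt
    obtain ⟨w, hw⟩ := hy.exists_isTip
    rcases hw.le_upper.lt_or_eq with h | h
    · exact ⟨(w, true), by simp [hw.mem], y, hy, hw, fun _ => h, by simp⟩
    · exact ⟨(w, false), by simp [hw.mem], y, hy, hw, by simp,
        fun _ => h ▸ hy.curve_lt hw.mem_lower hw.mem_upper⟩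
  · rintro ⟨w, _ | _⟩ - ⟨u₁, v₁⟩ ⟨-, y₁, h₁, t₁, a₁, b₁⟩ ⟨u₂, v₂⟩ ⟨-, y₂, h₂, t₂, a₂, b₂⟩
    · obtain ⟨rfl, rfl⟩ := t₁.eq_of_lower_lt h₁ h₂ t₂ (b₁ rfl) (b₂ rfl)
      rfl
    · obtain ⟨rfl, rfl⟩ := t₁.eq_of_lt_upper h₁ h₂ t₂ (a₁ rfl) (a₂ rfl)
      exact congrArg (Sigma.mk u₁) (h₁.lower_unique h₂)

theorem sum_card_out_le : ∑ u ∈ D.V, (D.out u).card ≤ 3 * D.V.card := by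
  calc
    _ ≤ ∑ u ∈ D.V, (1 + (D.nonTop u).card) := Finset.sum_le_sum fun u _ => D.card_out_le u
    _ = D.V.card + ∑ u ∈ D.V, (D.nonTop u).card := by
      rw [Finset.sum_add_distrib, Finset.card_eq_sum_ones]
    _ ≤ 3 * D.V.card := by linarith [D.sum_card_nonTop_le]

/-- The directed paths from `v` to `a`, represented by their vertex sequences without the first
vertex `v`. -/
def tails (a v : ι) : Set (List ι) :=
  {L | (v :: L).IsChain D.Adj ∧ (v :: L).getLast? = some a}

variable {D}

theorem pairwise_pos_lt_of_mem_tails {a v : ι} {L : List ι} (hL : L ∈ D.tails a v) :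
    (v :: L).Pairwise fun u w => D.pos u < D.pos w :=
  List.isChain_iff_pairwise.1 (hL.1.imp fun _ _ => D.pos_lt)

theorem eq_nil_of_mem_tails {a v : ι} {L : List ι} (hL : L ∈ D.tails a v)
    (hav : D.pos a ≤ D.pos v) : L = [] := by
  rcases L.eq_nil_or_concat' with rfl | ⟨M, b, rfl⟩
  · rfl
  · have hb : b = a := by
      simpa only [← List.cons_append, List.getLast?_concat, Option.some_inj] using hL.2
    have hvb := List.rel_of_pairwise_cons (pairwise_pos_lt_of_mem_tails hL)
      (List.mem_concat_self (a := b))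
    exact absurd hav (hb ▸ hvb).not_ge

theorem tails_self (a : ι) : D.tails a a = {[]} := by
  ext L
  refine ⟨fun hL => eq_nil_of_mem_tails hL le_rfl, ?_⟩
  rintro rfl
  simp [tails]

theorem tails_eq_empty {a v : ι} (hva : v ≠ a) (hav : D.pos a ≤ D.pos v) : D.tails a v = ∅ := by
  rw [Set.eq_empty_iff_forall_notMem]
  intro L hL
  obtain rfl := eq_nil_of_mem_tails hL hav
  exact hva (by simpa using hL.2)

theorem tails_of_ne {a v : ι} (hva : v ≠ a) :
    D.tails a v = ⋃ w ∈ D.out v, List.cons w '' D.tails a w := by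
  ext L
  cases L with
  | nil => simp [tails, hva]
  | cons w M =>
    simp [tails, mem_out, List.isChain_cons_cons, List.getLast?_cons_cons, and_comm, and_left_comm]

theorem ncard_tails_le_sum {a v : ι} (hva : v ≠ a) :
    (D.tails a v).ncard ≤ ∑ w ∈ D.out v, (D.tails a w).ncard := by
  rw [tails_of_ne hva]
  refine (Finset.set_ncard_biUnion_le _ _).trans_eq (Finset.sum_congr rfl fun w _ => ?_)
  exact Set.ncard_image_of_injective _ List.cons_injective

variable (D)

open scoped Classical in
theorem induction_on_V {P : Finset ι → Prop} (empty : P ∅)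
    (insert : ∀ u W, u ∉ W → D.out u ⊆ W → (∀ w ∈ W, D.pos u ≤ D.pos w) → P W → P (insert u W)) :
    P D.V := by
  suffices ∀ W : Finset ι, (∀ u ∈ W, D.out u ⊆ W) → P W from
    this D.V fun _ _ => Finset.filter_subset _ _
  intro W hW
  induction W using Finset.induction_on_min_value D.pos with
  | empty => exact empty
  | insert u W huW hmin ih =>
    have out_subset : ∀ v ∈ Insert.insert u W, D.out v ⊆ W := fun v hv w hw => by
      refine Finset.mem_of_mem_insert_of_ne (hW v hv hw) ?_
      rintro rfl
      have hvw := D.pos_lt (D.mem_out.1 hw)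
      rcases Finset.mem_insert.1 hv with rfl | hvW
      · exact lt_irrefl _ hvw
      · exact (hmin v hvW).not_gt hvw
    exact insert u W huW (out_subset u (Finset.mem_insert_self u W)) hmin
      (ih fun v hv => out_subset v (Finset.mem_insert_of_mem hv))

theorem finite_tails (a : ι) {v : ι} (hv : v ∈ D.V) : (D.tails a v).Finite := by
  classical
  refine D.induction_on_V (P := fun W => ∀ v ∈ W, (D.tails a v).Finite) (by simp) ?_ v hv
  intro u W _ hout _ ih v hv
  rcases Finset.mem_insert.1 hv with rfl | hv
  · by_cases hva : v = a
    · rw [hva, tails_self]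
      exact Set.finite_singleton _
    · rw [tails_of_ne hva]
      exact (D.out v).finite_toSet.biUnion fun w hw => (ih w (hout hw)).image _
  · exact ih v hv

theorem sum_insert_ncard_tails_self [DecidableEq ι] {a : ι} {T : Finset ι} (haT : a ∉ T)
    (hmin : ∀ v ∈ T, D.pos a ≤ D.pos v) : ∑ v ∈ insert a T, (D.tails a v).ncard = 1 := by
  have hT : ∑ v ∈ T, (D.tails a v).ncard = 0 := Finset.sum_eq_zero fun v hv => by
    rw [tails_eq_empty (ne_of_mem_of_not_mem hv haT) (hmin v hv), Set.ncard_empty]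
  rw [Finset.sum_insert haT, hT, tails_self, Set.ncard_singleton]

theorem sum_ncard_tails_le {α : ℝ} (h3 : α ^ 3 = α ^ 2 + α + 1) (a : ι) {S : Finset ι}
    (hS : S ⊆ D.V) :
    ∑ v ∈ S, ((D.tails a v).ncard : ℝ) ≤
      sumBound α S.card * ∏ w ∈ D.V, degreeWeight α (D.out w).card := by
  classical
  obtain ⟨hl, hu⟩ := tribonacci_bounds h3
  refine D.induction_on_V (P := fun W => ∀ S ⊆ W, ∑ v ∈ S, ((D.tails a v).ncard : ℝ) ≤
    sumBound α S.card * ∏ w ∈ W, degreeWeight α (D.out w).card) ?_ ?_ S hS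
  · intro S hS
    simp [Finset.subset_empty.1 hS, sumBound]
  intro u W huW hout hmin ih S hS
  have one_le_weight := one_le_degreeWeight h3
  rw [Finset.prod_insert huW]
  set weight := ∏ w ∈ W, degreeWeight α (D.out w).card
  have hweight : 1 ≤ weight := Finset.one_le_prod fun w _ => one_le_weight _
  by_cases huS : u ∈ S
  swap
  · calc
      _ ≤ sumBound α S.card * weight := ih S ((Finset.subset_insert_iff_of_notMem huS).1 hS)
      _ ≤ _ := by
        refine mul_le_mul_of_nonneg_left ?_ (sumBound_nonneg (by linarith) _)
        exact le_mul_of_one_le_left (by linarith) (one_le_weight _)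
  obtain ⟨T, huT, rfl⟩ : ∃ T, u ∉ T ∧ insert u T = S :=
    ⟨S.erase u, Finset.notMem_erase u S, Finset.insert_erase huS⟩
  have hTW : T ⊆ W := (Finset.insert_subset_insert_iff huT).1 hS
  rw [Finset.card_insert_of_notMem huT]
  by_cases hua : u = a
  · subst hua
    rw [← Nat.cast_sum, D.sum_insert_ncard_tails_self huT fun v hv => hmin v (hTW hv), Nat.cast_one]
    exact one_le_mul_of_one_le_of_one_le (one_le_sumBound_add_one (by linarith) (by linarith) _)
      (one_le_mul_of_one_le_of_one_le (one_le_weight _) hweight)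
  · calc
      _ ≤ ∑ w ∈ D.out u, ((D.tails a w).ncard : ℝ) + ∑ v ∈ T, ((D.tails a v).ncard : ℝ) := by
        rw [Finset.sum_insert huT]
        exact add_le_add_left (mod_cast ncard_tails_le_sum hua) _
      _ ≤ sumBound α (D.out u).card * weight + sumBound α T.card * weight :=
        add_le_add (ih _ hout) (ih T hTW)
      _ = (sumBound α (D.out u).card + sumBound α T.card) * weight := by ring
      _ ≤ degreeWeight α (D.out u).card * sumBound α (T.card + 1) * weight :=
        mul_le_mul_of_nonneg_right (sumBound_add_sumBound_le h3 _ _) (by linarith)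
      _ = _ := by ring

theorem ncard_tails_le {α : ℝ} (h3 : α ^ 3 = α ^ 2 + α + 1) (a : ι) {v : ι}
    (hv : v ∈ D.V) : ((D.tails a v).ncard : ℝ) ≤ α * α ^ D.V.card := by
  obtain ⟨hl, hu⟩ := tribonacci_bounds h3
  calc
    _ ≤ α * ∏ w ∈ D.V, degreeWeight α (D.out w).card := by
      simpa [sumBound] using D.sum_ncard_tails_le h3 a (Finset.singleton_subset_iff.2 hv)
    _ ≤ α * α ^ D.V.card := by
      refine mul_le_mul_of_nonneg_left ?_ (by linarith)
      exact prod_degreeWeight_le (by linarith) (by linarith) D.sum_card_out_le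

end MonotoneDrawing

/-! ### Polar coordinates -/

/-- No two points of `V` are collinear with `o`, and `o` is not in `V`. -/
def InGeneralPosition (V : Finset Pt) (o : Pt) : Prop :=
  o ∉ V ∧ ∀ a ∈ V, ∀ b ∈ V, a ≠ b → crossp (a - o) (b - o) ≠ 0

/-- The unit vector in the direction of angle `t`. -/
def unitVec (t : ℝ) : Pt := (Real.cos t, Real.sin t)

/-- The polar angle of `x` around `o`, in `(-π, π]`. -/
def angle (o x : Pt) : ℝ := (Complex.equivRealProdCLM.symm (x - o)).arg

/-- The Euclidean distance from `o` to `x`. -/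
def radius (o x : Pt) : ℝ := ‖Complex.equivRealProdCLM.symm (x - o)‖

theorem sub_eq_radius_smul (o x : Pt) : x - o = radius o x • unitVec (angle o x) :=
  Prod.ext (Complex.norm_mul_cos_arg (Complex.equivRealProdCLM.symm (x - o))).symm
    (Complex.norm_mul_sin_arg (Complex.equivRealProdCLM.symm (x - o))).symm

theorem radius_pos {o x : Pt} (h : x ≠ o) : 0 < radius o x := by
  rw [radius, norm_pos_iff, ne_eq, EmbeddingLike.map_eq_zero_iff, sub_eq_zero]
  exact h

theorem crossp_smul_left (r : ℝ) (x y : Pt) : crossp (r • x) y = r * crossp x y := by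
  simp only [crossp, Prod.smul_fst, Prod.smul_snd, smul_eq_mul]
  ring

theorem crossp_smul_right (r : ℝ) (x y : Pt) : crossp x (r • y) = r * crossp x y := by
  simp only [crossp, Prod.smul_fst, Prod.smul_snd, smul_eq_mul]
  ring

theorem crossp_comm (x y : Pt) : crossp x y = -crossp y x := by
  simp only [crossp]
  ring

theorem crossp_sub_right (d o u v : Pt) :
    crossp d (v - u) = crossp d (v - o) + crossp (u - o) d := by
  simp only [crossp, Prod.fst_sub, Prod.snd_sub]
  ring

theorem crossp_unitVec (s t : ℝ) : crossp (unitVec s) (unitVec t) = Real.sin (t - s) := by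
  simp only [crossp, unitVec, Real.sin_sub]
  ring

theorem crossp_unitVec_right (o v : Pt) (t : ℝ) :
    crossp (unitVec t) (v - o) = radius o v * Real.sin (angle o v - t) := by
  rw [sub_eq_radius_smul o v, crossp_smul_right, crossp_unitVec]

theorem crossp_unitVec_left (o u : Pt) (t : ℝ) :
    crossp (u - o) (unitVec t) = radius o u * Real.sin (t - angle o u) := by
  rw [sub_eq_radius_smul o u, crossp_smul_left, crossp_unitVec]

theorem crossp_eq_radius_mul_sin (o u v : Pt) : crossp (u - o) (v - o) =
    radius o u * radius o v * Real.sin (angle o v - angle o u) := by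
  rw [sub_eq_radius_smul o v, crossp_smul_right, crossp_unitVec_left]
  ring

theorem left_ne_of_crossp_ne_zero {o u v : Pt} (h : crossp (u - o) (v - o) ≠ 0) : u ≠ o := by
  rintro rfl
  simp [crossp] at h

theorem right_ne_of_crossp_ne_zero {o u v : Pt} (h : crossp (u - o) (v - o) ≠ 0) : v ≠ o := by
  rintro rfl
  simp [crossp] at h

theorem sin_angle_sub_pos_iff {o u v : Pt} (hu : u ≠ o) (hv : v ≠ o) :
    0 < Real.sin (angle o v - angle o u) ↔ 0 < crossp (u - o) (v - o) := by
  rw [crossp_eq_radius_mul_sin,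
    mul_pos_iff_of_pos_left (mul_pos (radius_pos hu) (radius_pos hv))]

theorem angle_sub_lt_two_pi (o u v : Pt) : angle o v - angle o u < 2 * Real.pi := by
  have hu : -Real.pi < angle o u := Complex.neg_pi_lt_arg _
  have hv : angle o v ≤ Real.pi := Complex.arg_le_pi _
  linarith

theorem angle_sub_lt_pi {o u v : Pt} (h : 0 < crossp (u - o) (v - o)) :
    angle o v - angle o u < Real.pi := by
  by_contra! hle
  have hlt := angle_sub_lt_two_pi o u v
  refine ((sin_angle_sub_pos_iff (left_ne_of_crossp_ne_zero h.ne')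
    (right_ne_of_crossp_ne_zero h.ne')).2 h).not_ge ?_
  rw [← Real.sin_sub_two_pi]
  exact Real.sin_nonpos_of_nonpos_of_neg_pi_le (by linarith) (by linarith)

/-- The line through `u` and `v` in polar coordinates around `o`: the inverse of its distance from
`o` in direction `t`. The inverse makes it a continuous function of `t`. -/
def polarCurve (o u v : Pt) (t : ℝ) : ℝ := crossp (unitVec t) (v - u) / crossp (u - o) (v - o)

theorem add_inv_smul_mem_openSegment {o u v d : Pt}
    (hv : 0 < crossp d (v - o)) (hu : 0 < crossp (u - o) d) :
    o + (crossp d (v - u) / crossp (u - o) (v - o))⁻¹ • d ∈ openSegment ℝ u v := by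
  set A := crossp d (v - o) with hA
  set B := crossp (u - o) d with hB
  have : 0 < A + B := add_pos hv hu
  refine ⟨A / (A + B), B / (A + B), by positivity, by positivity, by field_simp, ?_⟩
  rw [crossp_sub_right d o u v, inv_div, ← hA, ← hB]
  ext
  · simp only [Prod.fst_add, Prod.smul_fst, smul_eq_mul]
    field_simp
    simp only [hA, hB, crossp, Prod.fst_sub, Prod.snd_sub]
    ring
  · simp only [Prod.snd_add, Prod.smul_snd, smul_eq_mul]
    field_simp
    simp only [hA, hB, crossp, Prod.fst_sub, Prod.snd_sub]
    ring

theorem polarCurve_mem_openSegment {o u v : Pt} {t : ℝ} (h : 0 < crossp (u - o) (v - o))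
    (ht : t ∈ Set.Ioo (angle o u) (angle o v)) :
    o + (polarCurve o u v t)⁻¹ • unitVec t ∈ openSegment ℝ u v := by
  have hpi := angle_sub_lt_pi h
  obtain ⟨hu, hv⟩ := ht
  refine add_inv_smul_mem_openSegment ?_ ?_
  · rw [crossp_unitVec_right]
    exact mul_pos (radius_pos (right_ne_of_crossp_ne_zero h.ne'))
      (Real.sin_pos_of_pos_of_lt_pi (by linarith) (by linarith))
  · rw [crossp_unitVec_left]
    exact mul_pos (radius_pos (left_ne_of_crossp_ne_zero h.ne'))
      (Real.sin_pos_of_pos_of_lt_pi (by linarith) (by linarith))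

theorem polarCurve_left {o u v : Pt} (h : crossp (u - o) (v - o) ≠ 0) :
    polarCurve o u v (angle o u) = (radius o u)⁻¹ := by
  have := radius_pos (left_ne_of_crossp_ne_zero h)
  have heq : crossp (u - o) (v - o) = radius o u * crossp (unitVec (angle o u)) (v - u) := by
    rw [crossp_sub_right _ o u v, crossp_unitVec_left, sub_self, Real.sin_zero, mul_zero, add_zero,
      ← crossp_smul_left, ← sub_eq_radius_smul]
  rw [polarCurve, heq, div_mul_cancel_right₀ (right_ne_zero_of_mul (heq ▸ h))]

theorem polarCurve_right {o u v : Pt} (h : crossp (u - o) (v - o) ≠ 0) :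
    polarCurve o u v (angle o v) = (radius o v)⁻¹ := by
  have := radius_pos (right_ne_of_crossp_ne_zero h)
  have heq : crossp (u - o) (v - o) = radius o v * crossp (unitVec (angle o v)) (v - u) := by
    rw [crossp_sub_right _ o u v, crossp_unitVec_right, sub_self, Real.sin_zero, mul_zero, zero_add,
      ← crossp_smul_right, ← sub_eq_radius_smul]
  rw [polarCurve, heq, div_mul_cancel_right₀ (right_ne_zero_of_mul (heq ▸ h))]

theorem continuous_polarCurve (o u v : Pt) : Continuous (polarCurve o u v) := by
  unfold polarCurve crossp unitVec
  fun_prop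

theorem InGeneralPosition.injOn_angle {V : Finset Pt} {o : Pt} (ho : InGeneralPosition V o) :
    Set.InjOn (angle o) V := by
  intro u hu v hv h
  by_contra hne
  refine ho.2 u hu v hv hne ?_
  rw [crossp_eq_radius_mul_sin, h, sub_self, Real.sin_zero, mul_zero]

namespace PSLG

variable {G : PSLG} {o u v u' v' w : Pt} {t : ℝ}

/-- The edge from `u` to `v` of `G` is counterclockwise as seen from `o` and does not cross the
horizontal ray from `o` to the left, along which the polar angle jumps. -/
structure PolarAdj (G : PSLG) (o u v : Pt) : Prop where
  edge : s(u, v) ∈ G.E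
  crossp_pos : 0 < crossp (u - o) (v - o)
  angle_lt : angle o u < angle o v

theorem PolarAdj.mem (h : G.PolarAdj o u v) (hw : w = u ∨ w = v) : w ∈ G.V := by
  obtain ⟨hu, hv, -⟩ := G.valid.1 u v h.edge
  rcases hw with rfl | rfl <;> assumption

theorem PolarAdj.polarCurve_endpoint (h : G.PolarAdj o u v) (hw : w = u ∨ w = v) :
    polarCurve o u v (angle o w) = (radius o w)⁻¹ := by
  rcases hw with rfl | rfl
  · exact polarCurve_left h.crossp_pos.ne'
  · exact polarCurve_right h.crossp_pos.ne'

theorem PolarAdj.polarCurve_ne (h : G.PolarAdj o u v) (hw : w ∈ G.V)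
    (hmem : angle o w ∈ Set.Ioo (angle o u) (angle o v)) :
    polarCurve o u v (angle o w) ≠ (radius o w)⁻¹ := by
  intro heq
  have hseg := polarCurve_mem_openSegment h.crossp_pos hmem
  rw [heq, inv_inv, ← sub_eq_radius_smul, add_sub_cancel] at hseg
  exact G.valid.2.1 u v h.edge w hw hseg

theorem PolarAdj.eq_or_eq_of_polarCurve_eq (ho : InGeneralPosition G.V o) (h : G.PolarAdj o u v)
    (hw : w ∈ G.V) (hmem : angle o w ∈ Set.Icc (angle o u) (angle o v))
    (heq : polarCurve o u v (angle o w) = (radius o w)⁻¹) : w = u ∨ w = v := by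
  rcases hmem.1.eq_or_lt with hu | hu
  · exact .inl (ho.injOn_angle hw (h.mem (.inl rfl)) hu.symm)
  rcases hmem.2.eq_or_lt with hv | hv
  · exact .inr (ho.injOn_angle hw (h.mem (.inr rfl)) hv)
  · exact absurd heq (h.polarCurve_ne hw ⟨hu, hv⟩)

theorem PolarAdj.eq_and_eq_of_polarCurve_eq (h : G.PolarAdj o u v) (h' : G.PolarAdj o u' v')
    (ht : t ∈ Set.Ioo (angle o u) (angle o v)) (ht' : t ∈ Set.Ioo (angle o u') (angle o v'))
    (heq : polarCurve o u v t = polarCurve o u' v' t) : u = u' ∧ v = v' := by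
  have hp := polarCurve_mem_openSegment h.crossp_pos ht
  have hp' := polarCurve_mem_openSegment h'.crossp_pos ht'
  rw [heq] at hp
  have hs : s(u, v) = s(u', v') := by
    by_contra hne
    exact Set.notMem_empty _ ((G.valid.2.2 u v u' v' h.edge h'.edge hne).subset ⟨hp, hp'⟩)
  rcases Sym2.eq_iff.1 hs with hs | ⟨rfl, rfl⟩
  · exact hs
  · exact absurd h.angle_lt h'.angle_lt.not_gt

theorem PolarAdj.eq_or_exists_of_polarCurve_eq (ho : InGeneralPosition G.V o)
    (h : G.PolarAdj o u v) (h' : G.PolarAdj o u' v') (ht : t ∈ Set.Icc (angle o u) (angle o v))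
    (ht' : t ∈ Set.Icc (angle o u') (angle o v'))
    (heq : polarCurve o u v t = polarCurve o u' v' t) :
    (u = u' ∧ v = v') ∨ ∃ w, t = angle o w ∧ (w = u ∨ w = v) ∧ (w = u' ∨ w = v') := by
  by_cases hend : ∃ w, t = angle o w ∧ ((w = u ∨ w = v) ∨ w = u' ∨ w = v')
  · right
    obtain ⟨w, rfl, hw | hw⟩ := hend
    · exact ⟨w, rfl, hw, h'.eq_or_eq_of_polarCurve_eq ho (h.mem hw) ht'
        (heq.symm.trans (h.polarCurve_endpoint hw))⟩
    · exact ⟨w, rfl, h.eq_or_eq_of_polarCurve_eq ho (h'.mem hw) ht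
        (heq.trans (h'.polarCurve_endpoint hw)), hw⟩
  · left
    have hne : ∀ w, ((w = u ∨ w = v) ∨ w = u' ∨ w = v') → t ≠ angle o w :=
      fun w hw htw => hend ⟨w, htw, hw⟩
    exact h.eq_and_eq_of_polarCurve_eq h'
      ⟨ht.1.lt_of_ne' (hne u (by simp)), ht.2.lt_of_ne (hne v (by simp))⟩
      ⟨ht'.1.lt_of_ne' (hne u' (by simp)), ht'.2.lt_of_ne (hne v' (by simp))⟩ heq

/-- The edges of `G` drawn in polar coordinates around `o`, cut along the horizontal ray from `o` to
the left. -/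
def polarDrawing (G : PSLG) (o : Pt) (ho : InGeneralPosition G.V o) : MonotoneDrawing Pt where
  V := G.V
  pos := angle o
  height v := (radius o v)⁻¹
  Adj := G.PolarAdj o
  curve := polarCurve o
  left_mem h := h.mem (.inl rfl)
  right_mem h := h.mem (.inr rfl)
  pos_injOn := ho.injOn_angle
  pos_lt h := h.angle_lt
  continuous_curve _ := continuous_polarCurve o _ _
  curve_left h := h.polarCurve_endpoint (.inl rfl)
  curve_right h := h.polarCurve_endpoint (.inr rfl)
  curve_ne_height h hw hu hv := h.polarCurve_ne hw ⟨hu, hv⟩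
  eq_or_of_curve_eq h h' ht ht' heq := h.eq_or_exists_of_polarCurve_eq ho h' ht ht' heq

end PSLG

section GeneralPosition

open Filter Topology Polynomial

theorem eventually_eval_ne_zero {p : ℝ[X]} (hp : p ≠ 0) (x : ℝ) :
    ∀ᶠ t in 𝓝[≠] x, p.eval t ≠ 0 :=
  nhdsNE_le_cofinite x (finite_setOfPred_isRoot hp).compl_mem_cofinite

theorem eventually_crossp_parabola_ne_zero (o : Pt) {a b : Pt} (hab : a ≠ b) :
    ∀ᶠ t in 𝓝[≠] (0 : ℝ), crossp (a - (o + (t, t ^ 2))) (b - (o + (t, t ^ 2))) ≠ 0 := by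
  set p : ℝ[X] := C (b.1 - a.1) * X ^ 2 + C (a.2 - b.2) * X + C (crossp (a - o) (b - o)) with hp
  have hp0 : p ≠ 0 := by
    refine fun h0 => hab (Prod.ext ?_ ?_)
    · have h2 := congrArg (coeff · 2) h0
      simpa [hp, -map_sub, sub_eq_zero, eq_comm] using h2
    · have h1 := congrArg (coeff · 1) h0
      simpa [hp, -map_sub, coeff_C, sub_eq_zero] using h1
  refine (eventually_eval_ne_zero hp0 0).mono fun t ht => ?_
  convert ht using 1
  simp only [hp, crossp, eval_add, eval_mul, eval_C, eval_pow, eval_X, Prod.fst_sub, Prod.snd_sub,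
    Prod.fst_add, Prod.snd_add]
  ring

theorem eventually_inGeneralPosition_parabola (V : Finset Pt) (o : Pt) :
    ∀ᶠ t in 𝓝[≠] (0 : ℝ), InGeneralPosition V (o + (t, t ^ 2)) := by
  have notMem : ∀ a ∈ V, ∀ᶠ t in 𝓝[≠] (0 : ℝ), a ≠ o + (t, t ^ 2) := fun a _ => by
    refine (eventually_eval_ne_zero (X_sub_C_ne_zero (a.1 - o.1)) 0).mono ?_
    rintro t ht rfl
    simp at ht
  have crossp_ne : ∀ a ∈ V, ∀ b ∈ V, ∀ᶠ t in 𝓝[≠] (0 : ℝ), a ≠ b →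
      crossp (a - (o + (t, t ^ 2))) (b - (o + (t, t ^ 2))) ≠ 0 := fun a _ b _ =>
    eventually_imp_distrib_left.2 (eventually_crossp_parabola_ne_zero o)
  filter_upwards [(eventually_all_finset V).2 notMem, (eventually_all_finset V).2 fun a ha =>
    (eventually_all_finset V).2 (crossp_ne a ha)] with t h₁ h₂
  exact ⟨fun h => h₁ _ h rfl, h₂⟩

theorem exists_inGeneralPosition (V : Finset Pt) {o : Pt} {P : Pt → Prop}
    (hP : ∀ᶠ x in 𝓝 o, P x) : ∃ x, InGeneralPosition V x ∧ P x := by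
  have hcont : Continuous fun t : ℝ => o + (t, t ^ 2) := by fun_prop
  have htendsto : Tendsto (fun t : ℝ => o + (t, t ^ 2)) (𝓝[≠] 0) (𝓝 o) :=
    (hcont.tendsto' 0 o (by simp)).mono_left nhdsWithin_le_nhds
  obtain ⟨t, ht⟩ :=
    ((eventually_inGeneralPosition_parabola V o).and (htendsto.eventually hP)).exists
  exact ⟨_, ht⟩

theorem exists_inGeneralPosition_left (V : Finset Pt) :
    ∃ o, InGeneralPosition V o ∧ ∀ v ∈ V, o.1 < v.1 := by
  obtain ⟨m, hm⟩ := (V.image Prod.fst).bddBelow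
  refine exists_inGeneralPosition V (o := (m - 1, 0)) ((eventually_all_finset V).2 fun v hv => ?_)
  refine (continuous_fst.tendsto _).eventually_lt_const (show m - 1 < v.1 from ?_)
  linarith [hm (Finset.mem_coe.2 (Finset.mem_image_of_mem Prod.fst hv))]

end GeneralPosition

theorem angle_lt_angle_of_left {o u v : Pt} (hu : o.1 < u.1) (hv : o.1 < v.1)
    (h : 0 < crossp (u - o) (v - o)) : angle o u < angle o v := by
  by_contra! hle
  have hangle : ∀ {x : Pt}, o.1 < x.1 → |angle o x| < Real.pi / 2 := fun hx =>
    Complex.abs_arg_lt_pi_div_two_iff.2 (.inl (sub_pos.2 hx))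
  refine ((sin_angle_sub_pos_iff (left_ne_of_crossp_ne_zero h.ne')
    (right_ne_of_crossp_ne_zero h.ne')).2 h).not_ge
    (Real.sin_nonpos_of_nonpos_of_neg_pi_le (by linarith) ?_)
  linarith [(abs_lt.1 (hangle hu)).2, (abs_lt.1 (hangle hv)).1]

open scoped Classical in
/-- The edges of `G` in both directions. -/
def PSLG.darts (G : PSLG) : Finset (Pt × Pt) :=
  (G.V ×ˢ G.V).filter fun p => s(p.1, p.2) ∈ G.E

theorem PSLG.mem_darts {G : PSLG} {p : Pt × Pt} : p ∈ G.darts ↔ s(p.1, p.2) ∈ G.E := by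
  classical
  rw [darts, Finset.mem_filter, Finset.mem_product, and_iff_right_iff_imp]
  exact fun h => ⟨(G.valid.1 _ _ h).1, (G.valid.1 _ _ h).2.1⟩

/- Seen from far to the left, every edge is drawn in exactly one direction. -/
theorem PSLG.card_darts_le (G : PSLG) : G.darts.card ≤ 6 * G.V.card := by
  classical
  obtain ⟨o, ho, hleft⟩ := exists_inGeneralPosition_left G.V
  set D := G.polarDrawing o ho
  have adj_of_crossp_pos : ∀ {u v}, s(u, v) ∈ G.E → 0 < crossp (u - o) (v - o) →
      v ∈ D.out u := fun {u v} huv h => by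
    obtain ⟨hu, hv, -⟩ := G.valid.1 u v huv
    exact D.mem_out.2 ⟨huv, h, angle_lt_angle_of_left (hleft u hu) (hleft v hv) h⟩
  set arcs : Finset (Pt × Pt) := (G.V.sigma D.out).map (Equiv.sigmaEquivProd Pt Pt).toEmbedding
  have harcs : arcs.card ≤ 3 * G.V.card := by
    rw [Finset.card_map, Finset.card_sigma]
    exact D.sum_card_out_le
  have hsub : G.darts ⊆ arcs ∪ arcs.image Prod.swap := by
    rintro ⟨u, v⟩ huv
    rw [mem_darts] at huv
    obtain ⟨hu, hv, hne⟩ := G.valid.1 u v huv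
    simp only [arcs, Finset.mem_union, Finset.mem_image, Finset.mem_map_equiv]
    rcases (ho.2 u hu v hv hne).lt_or_gt with h | h
    · refine .inr ⟨(v, u), Finset.mem_sigma.2 ⟨hv, adj_of_crossp_pos (Sym2.eq_swap ▸ huv) ?_⟩, rfl⟩
      rw [crossp_comm]
      exact neg_pos.2 h
    · exact .inl (Finset.mem_sigma.2 ⟨hu, adj_of_crossp_pos huv h⟩)
  calc
    _ ≤ arcs.card + (arcs.image Prod.swap).card :=
      (Finset.card_le_card hsub).trans (Finset.card_union_le _ _)
    _ ≤ arcs.card + arcs.card := Nat.add_le_add_left Finset.card_image_le _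
    _ ≤ 6 * G.V.card := by linarith

/-! ### Orientation patterns -/

theorem isLinearMap_crossp (x : Pt) : IsLinearMap ℝ (crossp x) where
  map_add y z := by
    simp only [crossp, Prod.fst_add, Prod.snd_add]
    ring
  map_smul r y := crossp_smul_right r x y

theorem crossp_sub_sub (o u v : Pt) :
    crossp (u - o) (v - o) = crossp u v - crossp o (v - u) := by
  simp only [crossp, Prod.fst_sub, Prod.snd_sub]
  ring

theorem continuous_crossp_sub_sub (u v : Pt) :
    Continuous fun o => crossp (u - o) (v - o) := by
  unfold crossp
  fun_prop

open scoped Classical in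
/-- The directed segments in `T` that are counterclockwise as seen from `o`. -/
def ccwPattern (T : Finset (Pt × Pt)) (o : Pt) : Finset (Pt × Pt) :=
  T.filter fun p => 0 < crossp (p.1 - o) (p.2 - o)

theorem mem_ccwPattern {T : Finset (Pt × Pt)} {o : Pt} {p : Pt × Pt} :
    p ∈ ccwPattern T o ↔ p ∈ T ∧ 0 < crossp (p.1 - o) (p.2 - o) := by
  classical
  exact Finset.mem_filter

open scoped Classical in
/-- The sets of directed segments in `T` that are the counterclockwise ones as seen from some point
of `S`. -/
def ccwPatterns (S : Set Pt) (T : Finset (Pt × Pt)) : Finset (Finset (Pt × Pt)) :=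
  T.powerset.filter fun A => ∃ o ∈ S, ccwPattern T o = A

theorem mem_ccwPatterns {S : Set Pt} {T A : Finset (Pt × Pt)} :
    A ∈ ccwPatterns S T ↔ ∃ o ∈ S, ccwPattern T o = A := by
  classical
  rw [ccwPatterns, Finset.mem_filter, Finset.mem_powerset, and_iff_right_iff_imp]
  rintro ⟨o, -, rfl⟩
  exact Finset.filter_subset _ _

/- The signed area seen from `o` is affine in `o`, and its linear part is determined by the vector
`p.2 - p.1` of the segment `p`. -/
theorem exists_sum_mul_crossp_eq {s : Finset (Pt × Pt)} (hs : 2 < s.card) :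
    ∃ (c : Pt × Pt → ℝ) (κ : ℝ), (∃ p ∈ s, 0 < c p) ∧
      ∀ o, ∑ p ∈ s, c p * crossp (p.1 - o) (p.2 - o) = κ := by
  have hdep : ¬ LinearIndepOn ℝ (fun p : Pt × Pt => p.2 - p.1) (s : Set (Pt × Pt)) := by
    intro h
    have hcard := h.fintype_card_le_finrank
    simp only [Finset.coe_sort_coe, Fintype.card_coe, Module.finrank_prod,
      Module.finrank_self] at hcard
    exact hs.not_ge hcard
  obtain ⟨c, hc, q, hq, hcq⟩ := not_linearIndepOn_finset_iff.1 hdep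
  have hsum : ∀ o, ∑ p ∈ s, c p * crossp (p.1 - o) (p.2 - o) = ∑ p ∈ s, c p * crossp p.1 p.2 := by
    intro o
    have hzero : ∑ p ∈ s, c p * crossp o (p.2 - p.1) = 0 := by
      simpa only [map_sum, map_smul, map_zero, IsLinearMap.mk'_apply, smul_eq_mul] using
        congrArg ((isLinearMap_crossp o).mk' _) hc
    simp only [crossp_sub_sub, mul_sub, Finset.sum_sub_distrib, hzero, sub_zero]
  rcases hcq.lt_or_gt with hneg | hpos
  · refine ⟨-c, -∑ p ∈ s, c p * crossp p.1 p.2, ⟨q, hq, neg_pos.2 hneg⟩, fun o => ?_⟩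
    simp only [Pi.neg_apply, neg_mul, Finset.sum_neg_distrib, hsum]
  · exact ⟨c, _, ⟨q, hq, hpos⟩, hsum⟩

section Shattering

variable {S : Set Pt} {T s : Finset (Pt × Pt)}

open scoped Classical in
theorem subset_of_shatters (hs : (ccwPatterns S T).Shatters s) : s ⊆ T := by
  obtain ⟨A, hA, hsA⟩ := hs.exists_superset
  exact hsA.trans (Finset.mem_powerset.1 (Finset.mem_filter.1 hA).1)

open scoped Classical in
theorem exists_crossp_pos_iff_of_shatters (hs : (ccwPatterns S T).Shatters s)
    (P : Pt × Pt → Prop) : ∃ o, ∀ p ∈ s, 0 < crossp (p.1 - o) (p.2 - o) ↔ P p := by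
  obtain ⟨A, hA, hsA⟩ := hs (Finset.filter_subset P s)
  obtain ⟨o, -, rfl⟩ := mem_ccwPatterns.1 hA
  refine ⟨o, fun p hp => ?_⟩
  have hmem := Finset.ext_iff.1 hsA p
  rwa [Finset.mem_inter, Finset.mem_filter, mem_ccwPattern, and_congr_right_iff, imp_iff_right hp,
    and_iff_right (subset_of_shatters hs hp)] at hmem

open scoped Classical in
theorem card_le_two_of_shatters (hs : (ccwPatterns S T).Shatters s) : s.card ≤ 2 := by
  by_contra! hcard
  obtain ⟨c, κ, ⟨q, hq, hcq⟩, hκ⟩ := exists_sum_mul_crossp_eq hcard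
  have κ_pos : 0 < κ := by
    obtain ⟨o, ho⟩ := exists_crossp_pos_iff_of_shatters hs fun p => 0 < c p
    rw [← hκ o]
    refine Finset.sum_pos' (fun p hp => ?_) ⟨q, hq, mul_pos hcq ((ho q hq).2 hcq)⟩
    rcases lt_or_ge 0 (c p) with h | h
    · exact (mul_pos h ((ho p hp).2 h)).le
    · exact mul_nonneg_of_nonpos_of_nonpos h (not_lt.1 fun h' => h.not_gt ((ho p hp).1 h'))
  have κ_nonpos : κ ≤ 0 := by
    obtain ⟨o, ho⟩ := exists_crossp_pos_iff_of_shatters hs fun p => c p < 0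
    rw [← hκ o]
    refine Finset.sum_nonpos fun p hp => ?_
    rcases lt_or_ge (c p) 0 with h | h
    · exact (mul_neg_of_neg_of_pos h ((ho p hp).2 h)).le
    · exact mul_nonpos_of_nonneg_of_nonpos h (not_lt.1 fun h' => h.not_gt ((ho p hp).1 h'))
  exact κ_pos.not_ge κ_nonpos

/- The Sauer–Shelah lemma for a family of Vapnik–Chervonenkis dimension at most two. -/
theorem card_ccwPatterns_le (S : Set Pt) (T : Finset (Pt × Pt)) :
    (ccwPatterns S T).card ≤ 1 + T.card + T.card ^ 2 := by
  classical
  have hsub : (ccwPatterns S T).shatterer ⊆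
      (Finset.range 3).biUnion fun k => T.powersetCard k := fun s hs => by
    rw [Finset.mem_shatterer] at hs
    exact Finset.mem_biUnion.2
      ⟨s.card, Finset.mem_range.2 (Nat.lt_succ_of_le (card_le_two_of_shatters hs)),
        Finset.mem_powersetCard.2 ⟨subset_of_shatters hs, rfl⟩⟩
  calc
    _ ≤ (ccwPatterns S T).shatterer.card := (ccwPatterns S T).card_le_card_shatterer
    _ ≤ ∑ k ∈ Finset.range 3, (T.powersetCard k).card :=
      (Finset.card_le_card hsub).trans Finset.card_biUnion_le
    _ = 1 + T.card + T.card.choose 2 := by simp [Finset.sum_range_succ]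
    _ ≤ 1 + T.card + T.card ^ 2 := Nat.add_le_add_left (Nat.choose_le_pow _ _) _

end Shattering

/-! ### Winding around a point -/

theorem im_div_eq_crossp_div (x y : Pt) :
    (Complex.equivRealProdCLM.symm y / Complex.equivRealProdCLM.symm x).im =
      crossp x y / Complex.normSq (Complex.equivRealProdCLM.symm x) := by
  simp only [Complex.div_im, Complex.equivRealProdCLM_symm_apply_re,
    Complex.equivRealProdCLM_symm_apply_im, crossp]
  ring

/-- The counterclockwise angle in `(-π, π]` at `o` from `u` to `v`. -/
def turn (o u v : Pt) : ℝ :=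
  (Complex.equivRealProdCLM.symm (v - o) / Complex.equivRealProdCLM.symm (u - o)).arg

section Turn

variable {o u v : Pt}

theorem im_div_pos (h : 0 < crossp (u - o) (v - o)) :
    0 < (Complex.equivRealProdCLM.symm (v - o) / Complex.equivRealProdCLM.symm (u - o)).im := by
  have hu := left_ne_of_crossp_ne_zero h.ne'
  rw [im_div_eq_crossp_div]
  exact div_pos h (Complex.normSq_pos.2 (by simpa [sub_eq_zero] using hu))

theorem turn_mem_Ioo (h : 0 < crossp (u - o) (v - o)) : turn o u v ∈ Set.Ioo 0 Real.pi := by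
  have him := im_div_pos h
  refine ⟨(Complex.arg_nonneg_iff.2 him.le).lt_of_ne' fun h0 => him.ne' ?_,
    Complex.arg_lt_pi_iff.2 (.inr him.ne')⟩
  exact (Complex.arg_eq_zero_iff.1 h0).2

theorem continuousAt_turn (h : 0 < crossp (u - o) (v - o)) :
    ContinuousAt (fun x => turn x u v) o := by
  have hu := left_ne_of_crossp_ne_zero h.ne'
  refine (Complex.continuousAt_arg (.inr (im_div_pos h).ne')).comp (f := fun x =>
    Complex.equivRealProdCLM.symm (v - x) / Complex.equivRealProdCLM.symm (u - x)) ?_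
  refine ContinuousAt.div ?_ ?_ (by simpa [sub_eq_zero] using hu)
  · exact (Complex.equivRealProdCLM.symm.continuous.comp (by fun_prop)).continuousAt
  · exact (Complex.equivRealProdCLM.symm.continuous.comp (by fun_prop)).continuousAt

theorem turn_eq_ite (h : 0 < crossp (u - o) (v - o)) :
    turn o u v = angle o v - angle o u +
      2 * Real.pi * (if angle o v ≤ angle o u then 1 else 0) := by
  have hu := left_ne_of_crossp_ne_zero h.ne'
  have hv := right_ne_of_crossp_ne_zero h.ne'
  obtain ⟨k, hk⟩ : ∃ k : ℤ, turn o u v - (angle o v - angle o u) = 2 * Real.pi * k := by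
    rw [← Real.Angle.angle_eq_iff_two_pi_dvd_sub, Real.Angle.coe_sub]
    exact Complex.arg_div_coe_angle (by simpa [sub_eq_zero] using hv)
      (by simpa [sub_eq_zero] using hu)
  obtain ⟨hpos, hlt⟩ := turn_mem_Ioo h
  have := Real.pi_pos
  rw [← sub_eq_iff_eq_add', hk]
  split_ifs with hle
  · have hgt := angle_sub_lt_two_pi o v u
    have h0 : (0 : ℝ) < k := by nlinarith
    have h2 : (k : ℝ) < 2 := by nlinarith
    obtain rfl : k = 1 := le_antisymm (Int.le_of_lt_add_one (mod_cast h2)) (mod_cast h0)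
    rw [Int.cast_one]
  · have hlt' := angle_sub_lt_pi h
    have h0 : (-1 : ℝ) < k := by nlinarith
    have h2 : (k : ℝ) < 1 := by nlinarith
    obtain rfl : k = 0 :=
      le_antisymm (Int.le_of_lt_add_one (mod_cast h2)) (Int.le_of_sub_one_lt (mod_cast h0))
    rw [Int.cast_zero]

theorem pi_lt_angle_sub (h : 0 < crossp (u - o) (v - o)) (hle : angle o v ≤ angle o u) :
    Real.pi < angle o u - angle o v := by
  have hturn := turn_eq_ite h
  rw [if_pos hle] at hturn
  linarith [(turn_mem_Ioo h).2]

end Turn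

/-- The indices of the steps of a closed sequence that cross the horizontal ray from `o` to the
left. -/
def crossings (f : ℕ → Pt) (n : ℕ) (o : Pt) : Finset ℕ :=
  (Finset.range n).filter fun i => angle o (f (i + 1)) ≤ angle o (f i)

/-- The points that see all `n` steps of `f` counterclockwise. -/
def ccwCenters (f : ℕ → Pt) (n : ℕ) : Set Pt :=
  {o | ∀ i < n, 0 < crossp (f i - o) (f (i + 1) - o)}

section Winding

variable {f : ℕ → Pt} {n : ℕ} {o o' : Pt}

theorem mem_crossings {i : ℕ} :
    i ∈ crossings f n o ↔ i < n ∧ angle o (f (i + 1)) ≤ angle o (f i) := by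
  rw [crossings, Finset.mem_filter, Finset.mem_range]

theorem sum_turn_eq (hf : f n = f 0) (ho : o ∈ ccwCenters f n) :
    ∑ i ∈ Finset.range n, turn o (f i) (f (i + 1)) = 2 * Real.pi * (crossings f n o).card := by
  rw [Finset.sum_congr rfl fun i hi => turn_eq_ite (ho i (Finset.mem_range.1 hi)),
    Finset.sum_add_distrib, Finset.sum_range_sub (fun i => angle o (f i)), hf, sub_self, zero_add,
    ← Finset.mul_sum, Finset.sum_boole, crossings]

theorem crossings_nonempty (hn : n ≠ 0) (hf : f n = f 0) (ho : o ∈ ccwCenters f n) :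
    (crossings f n o).Nonempty := by
  have hsum : 0 < ∑ i ∈ Finset.range n, turn o (f i) (f (i + 1)) :=
    Finset.sum_pos (fun i hi => (turn_mem_Ioo (ho i (Finset.mem_range.1 hi))).1)
      (Finset.nonempty_range_iff.2 hn)
  rw [sum_turn_eq hf ho] at hsum
  rw [← Finset.card_pos, ← Nat.cast_pos (α := ℝ)]
  exact pos_of_mul_pos_right hsum Real.two_pi_pos.le

theorem convex_setOf_crossp_pos (u v : Pt) :
    Convex ℝ {o : Pt | 0 < crossp (u - o) (v - o)} := by
  have heq : {o : Pt | 0 < crossp (u - o) (v - o)} = {o | -crossp u v < crossp (v - u) o} := by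
    ext o
    rw [Set.mem_ofPred_eq, Set.mem_ofPred_eq, crossp_sub_sub, crossp_comm o, sub_neg_eq_add,
      neg_lt_iff_pos_add']
  rw [heq]
  exact convex_halfSpace_gt (isLinearMap_crossp (v - u)) _

theorem convex_ccwCenters (f : ℕ → Pt) (n : ℕ) : Convex ℝ (ccwCenters f n) := by
  simp only [ccwCenters, Set.ofPred_forall]
  exact convex_iInter₂ fun i _ => convex_setOf_crossp_pos _ _

/- On the convex set `ccwCenters f n` the number of crossings is the winding number, which varies
continuously. -/
theorem card_crossings_eq (hf : f n = f 0) (ho : o ∈ ccwCenters f n)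
    (ho' : o' ∈ ccwCenters f n) : (crossings f n o).card = (crossings f n o').card := by
  set F : Pt → ℝ := fun x =>
    (∑ i ∈ Finset.range n, turn x (f i) (f (i + 1))) / (2 * Real.pi)
  have hF : ∀ x ∈ ccwCenters f n, F x = (crossings f n x).card := fun x hx => by
    simp only [F, sum_turn_eq hf hx, mul_div_cancel_left₀ _ Real.two_pi_pos.ne']
  have hcont : ContinuousOn F (ccwCenters f n) := by
    refine ContinuousOn.div_const (continuousOn_finsetSum _ fun i hi x hx => ?_) _
    exact (continuousAt_turn (hx i (Finset.mem_range.1 hi))).continuousWithinAt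
  have hconst : F o = F o' := (convex_ccwCenters f n).isPreconnected.constant_of_mapsTo
    Nat.isClosedEmbedding_coe_real.isInducing.isDiscrete_range hcont
    (fun x hx => ⟨_, (hF x hx).symm⟩) ho ho'
  exact_mod_cast (hF o ho).symm.trans (hconst.trans (hF o' ho'))

end Winding

/-! ### Star-shaped polygons -/

/-- Every ray from `o` meets `B` in at most one point. -/
def RayUnique (B : Set Pt) (o : Pt) : Prop :=
  ∀ d : Pt, d ≠ 0 → ∀ s t : ℝ, 0 ≤ s → 0 ≤ t → o + s • d ∈ B → o + t • d ∈ B → s = t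

section RayUnique

variable {B B' : Set Pt} {o a v b : Pt}

theorem RayUnique.mono (hB : RayUnique B o) (h : B' ⊆ B) : RayUnique B' o :=
  fun d hd s t hs ht hsB htB => hB d hd s t hs ht (h hsB) (h htB)

theorem exists_eq_smul_of_crossp_eq_zero {x y : Pt} (hx : x ≠ 0) (h : crossp x y = 0) :
    ∃ r : ℝ, y = r • x := by
  rw [crossp, sub_eq_zero] at h
  by_cases h1 : x.1 = 0
  · have h2 : x.2 ≠ 0 := fun h2 => hx (Prod.ext h1 h2)
    refine ⟨y.2 / x.2, Prod.ext ?_ (div_mul_cancel₀ _ h2).symm⟩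
    rw [Prod.smul_fst, smul_eq_mul, div_mul_eq_mul_div, eq_div_iff h2, mul_comm y.2, h, mul_comm]
  · refine ⟨y.1 / x.1, Prod.ext (div_mul_cancel₀ _ h1).symm ?_⟩
    rw [Prod.smul_snd, smul_eq_mul, div_mul_eq_mul_div, eq_div_iff h1, mul_comm y.1, ← h, mul_comm]

/- The line through a segment that is collinear with `o` consists of two rays from `o`, one of which
contains half of the segment. -/
theorem RayUnique.crossp_ne_zero (hB : RayUnique B o) (hab : segment ℝ a b ⊆ B) (hne : a ≠ b) :
    crossp (a - o) (b - o) ≠ 0 := by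
  intro h0
  have hd : b - a ≠ 0 := sub_ne_zero.2 hne.symm
  obtain ⟨τ, hτ⟩ : ∃ τ : ℝ, a - o = τ • (b - a) := by
    refine exists_eq_smul_of_crossp_eq_zero hd ?_
    simp only [crossp, Prod.fst_sub, Prod.snd_sub] at h0 ⊢
    linarith
  have hmem : ∀ t ∈ Set.Icc (0 : ℝ) 1, o + (τ + t) • (b - a) ∈ B := fun t ht => by
    rw [add_smul, ← hτ, ← add_assoc, add_sub_cancel]
    rw [segment_eq_image'] at hab
    exact hab ⟨t, ht, rfl⟩
  rcases le_total (-1 / 2) τ with h | h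
  · have heq := hB (b - a) hd (τ + 1 / 2) (τ + 1) (by linarith) (by linarith)
      (hmem _ (by norm_num)) (hmem _ (by norm_num))
    linarith
  · have heq := hB (-(b - a)) (neg_ne_zero.2 hd) (-(τ + 0)) (-(τ + 1 / 2)) (by linarith)
      (by linarith) (by rw [neg_smul_neg]; exact hmem _ (by norm_num))
      (by rw [neg_smul_neg]; exact hmem _ (by norm_num))
    linarith

theorem exists_add_smul_mem_openSegment {u d : Pt} (huv : 0 < crossp (u - o) (v - o))
    (hv : 0 < crossp d (v - o)) (hu : 0 < crossp (u - o) d) :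
    ∃ r : ℝ, 0 ≤ r ∧ o + r • d ∈ openSegment ℝ u v := by
  refine ⟨_, inv_nonneg.2 (div_nonneg ?_ huv.le), add_inv_smul_mem_openSegment hv hu⟩
  rw [crossp_sub_right d o]
  exact (add_pos hv hu).le

/- If the boundary turned back at `v`, then a ray passing `v` closely would meet both edges. -/
theorem RayUnique.crossp_pos_of_crossp_pos (hB : RayUnique B o) (hav : segment ℝ a v ⊆ B)
    (hvb : segment ℝ v b ⊆ B) (hne : v ≠ b)
    (hdisj : openSegment ℝ a v ∩ openSegment ℝ v b = ∅) (ha : 0 < crossp (a - o) (v - o)) :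
    0 < crossp (v - o) (b - o) := by
  by_contra! hle
  have hb : 0 < crossp (b - o) (v - o) := by
    rw [crossp_comm]
    exact neg_pos.2 (hle.lt_of_ne (hB.crossp_ne_zero hvb hne))
  obtain ⟨ε, hε, hεb⟩ := exists_pos_mul_lt hb (-crossp (b - o) (a - o))
  set d := (v - o) + ε • (a - o)
  have hdv : crossp d (v - o) = ε * crossp (a - o) (v - o) := by
    simp only [d, crossp, Prod.fst_add, Prod.snd_add, Prod.smul_fst, Prod.smul_snd, smul_eq_mul]
    ring
  have hd : ∀ x, crossp (x - o) d = crossp (x - o) (v - o) + ε * crossp (x - o) (a - o) := by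
    intro x
    rw [(isLinearMap_crossp _).map_add, crossp_smul_right]
  have hdv_pos : 0 < crossp d (v - o) := hdv ▸ mul_pos hε ha
  have had : crossp (a - o) (a - o) = 0 := by rw [crossp]; ring
  obtain ⟨r, hr, hra⟩ := exists_add_smul_mem_openSegment ha hdv_pos
    (by rwa [hd, had, mul_zero, add_zero])
  obtain ⟨s, hs, hsb⟩ := exists_add_smul_mem_openSegment hb hdv_pos (by rw [hd]; linarith)
  rw [openSegment_symm] at hsb
  have hd0 : d ≠ 0 := fun h0 => by simp [h0, crossp] at hdv_pos
  obtain rfl := hB d hd0 r s hr hs (hav (openSegment_subset_segment _ _ _ hra))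
    (hvb (openSegment_subset_segment _ _ _ hsb))
  exact Set.notMem_empty _ (hdisj.subset ⟨hra, hsb⟩)

theorem exists_leftward_crossing (h : 0 < crossp (a - o) (b - o))
    (hle : angle o b ≤ angle o a) : ∃ r : ℝ, 0 ≤ r ∧
      (o + r • ((-1, 0) : Pt) = a ∨ o + r • ((-1, 0) : Pt) ∈ openSegment ℝ a b) := by
  have hpi := pi_lt_angle_sub h hle
  have hb_gt : -Real.pi < angle o b := Complex.neg_pi_lt_arg _
  have ha_le : angle o a ≤ Real.pi := Complex.arg_le_pi _
  have ha : 0 ≤ (a - o).2 := Complex.arg_nonneg_iff.1 (show 0 ≤ angle o a by linarith)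
  have hb : (b - o).2 < 0 := Complex.arg_neg_iff.1 (show angle o b < 0 by linarith)
  rcases ha.eq_or_lt with ha0 | ha_pos
  · have ha1 : (a - o).1 < 0 := by
      rw [crossp, ← ha0, zero_mul, sub_zero] at h
      exact neg_of_mul_pos_left h hb.le
    refine ⟨-(a - o).1, by linarith, .inl ?_⟩
    rw [← eq_sub_iff_add_eq']
    exact Prod.ext (by simp) (by simpa using ha0)
  · obtain ⟨r, hr, hmem⟩ := exists_add_smul_mem_openSegment (d := (-1, 0)) h
      (by simpa [crossp] using hb) (by simpa [crossp] using ha_pos)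
    exact ⟨r, hr, .inr hmem⟩

end RayUnique

theorem cyclePairs_rotate (L : List Pt) (k : ℕ) :
    cyclePairs (L.rotate k) = (cyclePairs L).rotate k := by
  rw [cyclePairs, cyclePairs, List.rotate_rotate, add_comm, ← List.rotate_rotate]
  exact (List.zipWith_rotate_distrib _ _ _ _ (List.length_rotate ..).symm).symm

theorem cyclePairs_reverse (L : List Pt) :
    cyclePairs L.reverse = ((cyclePairs L).map Prod.swap).reverse.rotate 1 := by
  have hrotate : (L.rotate 1).reverse.rotate 1 = L.reverse := by
    cases L <;> simp
  rw [cyclePairs, cyclePairs, List.zip_swap, List.zip_eq_zipWith, List.zip_eq_zipWith,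
    List.reverse_zipWith (List.length_rotate ..),
    List.zipWith_rotate_distrib _ _ _ _ (by simp), hrotate]

theorem mem_cyclePairs_reverse {L : List Pt} {p : Pt × Pt} :
    p ∈ cyclePairs L.reverse ↔ p.swap ∈ cyclePairs L := by
  rw [cyclePairs_reverse, List.mem_rotate, List.mem_reverse, List.mem_map]
  constructor
  · rintro ⟨q, hq, rfl⟩
    rwa [Prod.swap_swap]
  · exact fun h => ⟨p.swap, h, p.swap_swap⟩

theorem cycleEdgeSet_rotate (L : List Pt) (k : ℕ) :
    cycleEdgeSet (L.rotate k) = cycleEdgeSet L := by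
  ext e
  simp only [cycleEdgeSet, cyclePairs_rotate, List.mem_toFinset, List.mem_map, List.mem_rotate]

theorem cycleEdgeSet_reverse (L : List Pt) : cycleEdgeSet L.reverse = cycleEdgeSet L := by
  ext e
  simp only [cycleEdgeSet, cyclePairs_reverse, List.mem_toFinset, List.mem_map, List.mem_rotate,
    List.mem_reverse, exists_exists_and_eq_and, Prod.fst_swap, Prod.snd_swap]
  simp only [Sym2.eq_swap]

theorem segment_subset_cycleBody {L : List Pt} {p : Pt × Pt} (hp : p ∈ cyclePairs L) :
    segment ℝ p.1 p.2 ⊆ cycleBody L :=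
  Set.subset_biUnion_of_mem (u := fun p : Pt × Pt => segment ℝ p.1 p.2) hp

theorem cycleBody_reverse_subset (L : List Pt) : cycleBody L.reverse ⊆ cycleBody L := by
  refine Set.iUnion₂_subset fun p hp => ?_
  rw [segment_symm]
  exact segment_subset_cycleBody (mem_cyclePairs_reverse.1 hp)

/-- The vertices of a cycle as a sequence with period `L.length`. -/
def vertexSeq (L : List Pt) (i : ℕ) : Pt := L.getD (i % L.length) 0

section VertexSeq

variable {L : List Pt}

theorem periodic_vertexSeq (L : List Pt) : Function.Periodic (vertexSeq L) L.length := fun i => by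
  simp [vertexSeq]

theorem vertexSeq_length (L : List Pt) : vertexSeq L L.length = vertexSeq L 0 :=
  (periodic_vertexSeq L).eq

theorem vertexSeq_of_lt {i : ℕ} (h : i < L.length) : vertexSeq L i = L[i] := by
  rw [vertexSeq, Nat.mod_eq_of_lt h, List.getD_eq_getElem _ _ h]

theorem vertexSeq_rotate (k i : ℕ) : vertexSeq (L.rotate k) i = vertexSeq L (i + k) := by
  rcases eq_or_ne L [] with rfl | hL
  · simp [vertexSeq]
  · have hlt := Nat.mod_lt i (List.length_pos_iff.2 hL)
    rw [← (periodic_vertexSeq _).map_mod_nat, List.length_rotate, vertexSeq_of_lt (by simpa),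
      List.getElem_rotate, ← vertexSeq_of_lt, Nat.mod_add_mod, (periodic_vertexSeq L).map_mod_nat]

theorem vertexSeq_eq_iff (hL : L ≠ []) (hnodup : L.Nodup) {i j : ℕ} :
    vertexSeq L i = vertexSeq L j ↔ i ≡ j [MOD L.length] := by
  have hpos := List.length_pos_iff.2 hL
  rw [← (periodic_vertexSeq L).map_mod_nat i, ← (periodic_vertexSeq L).map_mod_nat j,
    vertexSeq_of_lt (Nat.mod_lt i hpos), vertexSeq_of_lt (Nat.mod_lt j hpos),
    hnodup.getElem_inj_iff, Nat.ModEq]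

theorem cyclePairs_eq_map (L : List Pt) :
    cyclePairs L = (List.range L.length).map fun i => (vertexSeq L i, vertexSeq L (i + 1)) := by
  refine List.ext_getElem (by simp [cyclePairs]) fun i _ hi => ?_
  rw [List.length_map, List.length_range] at hi
  rw [List.getElem_map, List.getElem_range]
  simp only [cyclePairs, List.getElem_zip, ← vertexSeq_of_lt, vertexSeq_rotate]

theorem mem_cyclePairs {p : Pt × Pt} :
    p ∈ cyclePairs L ↔ ∃ i < L.length, (vertexSeq L i, vertexSeq L (i + 1)) = p := by
  simp only [cyclePairs_eq_map, List.mem_map, List.mem_range]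

theorem vertexSeq_mod_add_one (L : List Pt) (i : ℕ) :
    vertexSeq L (i % L.length + 1) = vertexSeq L (i + 1) := by
  rw [← (periodic_vertexSeq L).map_mod_nat, Nat.mod_add_mod, (periodic_vertexSeq L).map_mod_nat]

theorem vertexSeq_mem_cyclePairs (hL : L ≠ []) (i : ℕ) :
    (vertexSeq L i, vertexSeq L (i + 1)) ∈ cyclePairs L := by
  refine mem_cyclePairs.2 ⟨i % L.length, Nat.mod_lt _ (List.length_pos_iff.2 hL), ?_⟩
  rw [(periodic_vertexSeq L).map_mod_nat, vertexSeq_mod_add_one]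

theorem mem_ccwCenters_vertexSeq {o : Pt} : o ∈ ccwCenters (vertexSeq L) L.length ↔
    ∀ p ∈ cyclePairs L, 0 < crossp (p.1 - o) (p.2 - o) := by
  simp only [mem_cyclePairs, forall_exists_index, and_imp, forall_apply_eq_imp_iff₂]
  rfl

theorem isChain_rotate_succ {R : Pt → Pt → Prop} {k : ℕ} (hk : k < L.length)
    (h : ∀ i, ¬ i ≡ k [MOD L.length] → R (vertexSeq L i) (vertexSeq L (i + 1))) :
    (L.rotate (k + 1)).IsChain R := by
  rw [List.isChain_iff_getElem]
  intro i hi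
  rw [← vertexSeq_of_lt, ← vertexSeq_of_lt, vertexSeq_rotate, vertexSeq_rotate, add_right_comm]
  refine h _ fun hmod => ?_
  rw [List.length_rotate] at hi
  have hmod' : i + 1 ≡ 0 [MOD L.length] := by
    refine Nat.ModEq.add_right_cancel' k ?_
    rwa [zero_add, add_assoc, add_comm 1]
  exact absurd (hmod'.eq_of_lt_of_lt hi (Nat.zero_lt_of_lt hk)) i.succ_ne_zero

theorem getLast?_rotate_succ {k : ℕ} (hk : k < L.length) :
    (L.rotate (k + 1)).getLast? = some (vertexSeq L k) := by
  have hlt : L.length - 1 < (L.rotate (k + 1)).length := by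
    rw [List.length_rotate]
    exact Nat.sub_one_lt_of_lt hk
  rw [List.getLast?_eq_getElem?, List.length_rotate, List.getElem?_eq_getElem hlt,
    ← vertexSeq_of_lt, vertexSeq_rotate, ← periodic_vertexSeq L k]
  congr 2
  lia

end VertexSeq

section IsCycleIn

variable {G : PSLG} {L : List Pt} {o o' x : Pt} {i j : ℕ}

theorem IsCycleIn.reverse (hc : IsCycleIn G L) : IsCycleIn G L.reverse := by
  refine ⟨by rw [List.length_reverse]; exact hc.1, List.nodup_reverse.2 hc.2.1, fun p hp => ?_⟩
  rw [Sym2.eq_swap]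
  exact hc.2.2 _ (mem_cyclePairs_reverse.1 hp)

theorem IsCycleIn.ne_nil (hc : IsCycleIn G L) : L ≠ [] :=
  List.length_pos_iff.1 (Nat.zero_lt_of_lt hc.1)

theorem IsCycleIn.edge_mem (hc : IsCycleIn G L) (i : ℕ) :
    s(vertexSeq L i, vertexSeq L (i + 1)) ∈ G.E :=
  hc.2.2 _ (vertexSeq_mem_cyclePairs hc.ne_nil i)

theorem IsCycleIn.modEq_of_edge_eq (hc : IsCycleIn G L)
    (h : s(vertexSeq L i, vertexSeq L (i + 1)) = s(vertexSeq L j, vertexSeq L (j + 1))) :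
    i ≡ j [MOD L.length] := by
  simp only [Sym2.eq_iff, vertexSeq_eq_iff hc.ne_nil hc.2.1] at h
  rcases h with ⟨h, -⟩ | ⟨h, h'⟩
  · exact h
  · have htwo : 2 ≡ 0 [MOD L.length] := ((h.symm.add_right 1).trans h').add_left_cancel' j
    exact absurd (Nat.le_of_dvd two_pos (Nat.modEq_zero_iff_dvd.1 htwo)) (Nat.not_le.2 hc.1)

theorem IsCycleIn.modEq_of_mem_openSegment (hc : IsCycleIn G L)
    (hi : x ∈ openSegment ℝ (vertexSeq L i) (vertexSeq L (i + 1)))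
    (hj : x ∈ openSegment ℝ (vertexSeq L j) (vertexSeq L (j + 1))) : i ≡ j [MOD L.length] := by
  by_contra hij
  exact Set.notMem_empty x ((G.valid.2.2 _ _ _ _ (hc.edge_mem i) (hc.edge_mem j)
    (mt hc.modEq_of_edge_eq hij)).subset ⟨hi, hj⟩)

theorem IsCycleIn.vertexSeq_notMem_openSegment (hc : IsCycleIn G L) (i j : ℕ) :
    vertexSeq L i ∉ openSegment ℝ (vertexSeq L j) (vertexSeq L (j + 1)) :=
  G.valid.2.1 _ _ (hc.edge_mem j) _ (G.valid.1 _ _ (hc.edge_mem i)).1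

theorem IsCycleIn.modEq_of_eq_or_mem_openSegment (hc : IsCycleIn G L)
    (hi : x = vertexSeq L i ∨ x ∈ openSegment ℝ (vertexSeq L i) (vertexSeq L (i + 1)))
    (hj : x = vertexSeq L j ∨ x ∈ openSegment ℝ (vertexSeq L j) (vertexSeq L (j + 1))) :
    i ≡ j [MOD L.length] := by
  rcases hi with rfl | hi
  · rcases hj with hj | hj
    · exact (vertexSeq_eq_iff hc.ne_nil hc.2.1).1 hj
    · exact absurd hj (hc.vertexSeq_notMem_openSegment i j)
  · rcases hj with rfl | hj
    · exact absurd hi (hc.vertexSeq_notMem_openSegment j i)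
    · exact hc.modEq_of_mem_openSegment hi hj

theorem IsCycleIn.crossp_pos_succ (hc : IsCycleIn G L) (hB : RayUnique (cycleBody L) o)
    (h : 0 < crossp (vertexSeq L i - o) (vertexSeq L (i + 1) - o)) :
    0 < crossp (vertexSeq L (i + 1) - o) (vertexSeq L (i + 2) - o) := by
  refine hB.crossp_pos_of_crossp_pos
    (segment_subset_cycleBody (vertexSeq_mem_cyclePairs hc.ne_nil i))
    (segment_subset_cycleBody (vertexSeq_mem_cyclePairs hc.ne_nil (i + 1)))
    (G.valid.1 _ _ (hc.edge_mem (i + 1))).2.2 (Set.eq_empty_iff_forall_notMem.2 ?_) h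
  rintro x ⟨hx, hx'⟩
  have hmod : 0 ≡ 1 [MOD L.length] :=
    (hc.modEq_of_mem_openSegment hx hx').add_left_cancel' i
  exact absurd (Nat.le_of_dvd one_pos (Nat.modEq_zero_iff_dvd.1 hmod.symm))
    (Nat.not_le.2 (Nat.lt_of_succ_lt hc.1))

theorem IsCycleIn.mem_ccwCenters (hc : IsCycleIn G L) (hB : RayUnique (cycleBody L) o)
    {p : Pt × Pt} (hp : p ∈ cyclePairs L) (h : 0 < crossp (p.1 - o) (p.2 - o)) :
    o ∈ ccwCenters (vertexSeq L) L.length := by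
  obtain ⟨i, -, rfl⟩ := mem_cyclePairs.1 hp
  have hall : ∀ k ≥ i, 0 < crossp (vertexSeq L k - o) (vertexSeq L (k + 1) - o) :=
    fun k hk => Nat.le_induction h (fun _ _ => hc.crossp_pos_succ hB) k hk
  intro j _
  have hj := hall (j + i * L.length)
    ((Nat.le_mul_of_pos_right i (List.length_pos_iff.2 hc.ne_nil)).trans (Nat.le_add_left _ _))
  have hperiod : ∀ k, vertexSeq L (k + i * L.length) = vertexSeq L k :=
    (periodic_vertexSeq L).nat_mul i
  rwa [add_right_comm, hperiod, hperiod] at hj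

theorem IsStarShapedPolygon.exists_rayUnique (h : IsStarShapedPolygon G L) :
    ∃ o, RayUnique (cycleBody L) o := by
  obtain ⟨-, o, ho⟩ := h
  refine ⟨o, fun d hd s t hs ht hsB htB => ?_⟩
  have heq := (ho d hd).unique ⟨hsB, s, hs, rfl⟩ ⟨htB, t, ht, rfl⟩
  exact smul_left_injective ℝ hd (add_left_cancel heq)

theorem IsStarShapedPolygon.exists_ccw (h : IsStarShapedPolygon G L) :
    ∃ L' o, IsCycleIn G L' ∧ cycleEdgeSet L' = cycleEdgeSet L ∧ RayUnique (cycleBody L') o ∧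
      o ∈ ccwCenters (vertexSeq L') L'.length := by
  obtain ⟨o, hB⟩ := h.exists_rayUnique
  have hc := h.1
  have hp := vertexSeq_mem_cyclePairs hc.ne_nil 0
  have hne := (G.valid.1 _ _ (hc.edge_mem 0)).2.2
  rcases (hB.crossp_ne_zero (segment_subset_cycleBody hp) hne).lt_or_gt with hneg | hpos
  · have hB' := hB.mono (cycleBody_reverse_subset L)
    refine ⟨L.reverse, o, hc.reverse, cycleEdgeSet_reverse L, hB', hc.reverse.mem_ccwCenters hB'
      (p := (vertexSeq L (0 + 1), vertexSeq L 0)) (mem_cyclePairs_reverse.2 hp) ?_⟩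
    rw [crossp_comm]
    exact neg_pos.2 hneg
  · exact ⟨L, o, hc, rfl, hB, hc.mem_ccwCenters hB hp hpos⟩

theorem IsCycleIn.card_crossings_le_one (hc : IsCycleIn G L) (hB : RayUnique (cycleBody L) o)
    (ho : o ∈ ccwCenters (vertexSeq L) L.length) :
    (crossings (vertexSeq L) L.length o).card ≤ 1 := by
  have hcross : ∀ i ∈ crossings (vertexSeq L) L.length o, ∃ r : ℝ, 0 ≤ r ∧
      o + r • ((-1, 0) : Pt) ∈ cycleBody L ∧ (o + r • ((-1, 0) : Pt) = vertexSeq L i ∨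
        o + r • ((-1, 0) : Pt) ∈ openSegment ℝ (vertexSeq L i) (vertexSeq L (i + 1))) := by
    intro i hi
    obtain ⟨hin, hle⟩ := mem_crossings.1 hi
    obtain ⟨r, hr, hmem⟩ := exists_leftward_crossing (ho i hin) hle
    refine ⟨r, hr, segment_subset_cycleBody (vertexSeq_mem_cyclePairs hc.ne_nil i) ?_, hmem⟩
    rcases hmem with heq | hmem
    · exact heq ▸ left_mem_segment ℝ _ _
    · exact openSegment_subset_segment _ _ _ hmem
  refine Finset.card_le_one.2 fun i hi j hj => ?_
  obtain ⟨r, hr, hrB, hri⟩ := hcross i hi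
  obtain ⟨s, hs, hsB, hsj⟩ := hcross j hj
  obtain rfl := hB (-1, 0) (by simp) r s hr hs hrB hsB
  exact (hc.modEq_of_eq_or_mem_openSegment hri hsj).eq_of_lt_of_lt (mem_crossings.1 hi).1
    (mem_crossings.1 hj).1

theorem IsCycleIn.card_crossings_eq_one (hc : IsCycleIn G L) (hB : RayUnique (cycleBody L) o)
    (ho : o ∈ ccwCenters (vertexSeq L) L.length) (ho' : o' ∈ ccwCenters (vertexSeq L) L.length) :
    (crossings (vertexSeq L) L.length o').card = 1 := by
  rw [card_crossings_eq (vertexSeq_length L) ho' ho]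
  have hne := crossings_nonempty (mt List.length_eq_zero_iff.1 hc.ne_nil) (vertexSeq_length L) ho
  exact (hc.card_crossings_le_one hB ho).antisymm hne.card_pos

theorem IsCycleIn.polarAdj (hc : IsCycleIn G L) (ho : o ∈ ccwCenters (vertexSeq L) L.length)
    (hi : i % L.length ∉ crossings (vertexSeq L) L.length o) :
    G.PolarAdj o (vertexSeq L i) (vertexSeq L (i + 1)) where
  edge := hc.edge_mem i
  crossp_pos := mem_ccwCenters_vertexSeq.1 ho _ (vertexSeq_mem_cyclePairs hc.ne_nil i)
  angle_lt := by
    rw [mem_crossings, (periodic_vertexSeq L).map_mod_nat, vertexSeq_mod_add_one] at hi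
    exact not_le.1 fun hle => hi ⟨Nat.mod_lt _ (List.length_pos_iff.2 hc.ne_nil), hle⟩

theorem IsCycleIn.exists_polar_path (hc : IsCycleIn G L)
    (ho : o ∈ ccwCenters (vertexSeq L) L.length)
    (hone : (crossings (vertexSeq L) L.length o).card = 1) :
    ∃ a v M, (a, v) ∈ cyclePairs L ∧ (v :: M).IsChain (G.PolarAdj o) ∧
      (v :: M).getLast? = some a ∧ cycleEdgeSet (v :: M) = cycleEdgeSet L := by
  obtain ⟨k, hk⟩ := Finset.card_eq_one.1 hone
  have hkL : k < L.length := (mem_crossings.1 (hk ▸ Finset.mem_singleton_self k)).1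
  obtain ⟨v, M, hvM⟩ := List.exists_cons_of_ne_nil (mt List.rotate_eq_nil_iff.1 hc.ne_nil)
  have hv : vertexSeq L (k + 1) = v := by
    rw [← zero_add (k + 1), ← vertexSeq_rotate, hvM]
    rfl
  refine ⟨vertexSeq L k, v, M, hv ▸ vertexSeq_mem_cyclePairs hc.ne_nil k, ?_, ?_, ?_⟩
  · rw [← hvM]
    refine isChain_rotate_succ hkL fun i hi => hc.polarAdj ho ?_
    rw [hk, Finset.mem_singleton, ← Nat.mod_eq_of_lt hkL]
    exact hi
  · rw [← hvM, getLast?_rotate_succ hkL]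
  · rw [← hvM, cycleEdgeSet_rotate]

end IsCycleIn

/-! ### Counting -/

/-- The edge sets of the cycles in `G` that are formed by a dart of `G` and a path that is monotone
in the polar drawing of `G` around `o`. -/
def PSLG.polarCycles (G : PSLG) (o : Pt) : Set (Finset (Sym2 Pt)) :=
  ⋃ p ∈ G.darts, (fun M => cycleEdgeSet (p.2 :: M)) ''
    {M | (p.2 :: M).IsChain (G.PolarAdj o) ∧ (p.2 :: M).getLast? = some p.1}

section Counting

variable {G : PSLG} {L : List Pt} {o : Pt} {α : ℝ}

theorem PSLG.finite_polarCycles (ho : InGeneralPosition G.V o) : (G.polarCycles o).Finite :=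
  G.darts.finite_toSet.biUnion fun p hp =>
    ((G.polarDrawing o ho).finite_tails p.1 (G.valid.1 _ _ (mem_darts.1 hp)).2.1).image _

theorem PSLG.ncard_polarCycles_le (h3 : α ^ 3 = α ^ 2 + α + 1) (ho : InGeneralPosition G.V o) :
    ((G.polarCycles o).ncard : ℝ) ≤ G.darts.card * (α * α ^ G.V.card) := by
  set D := G.polarDrawing o ho
  have hV : ∀ p ∈ G.darts, p.2 ∈ D.V := fun p hp => (G.valid.1 _ _ (mem_darts.1 hp)).2.1
  calc
    _ ≤ ∑ p ∈ G.darts, (((fun M => cycleEdgeSet (p.2 :: M)) '' D.tails p.1 p.2).ncard : ℝ) :=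
      mod_cast Finset.set_ncard_biUnion_le _ _
    _ ≤ ∑ p ∈ G.darts, ((D.tails p.1 p.2).ncard : ℝ) := Finset.sum_le_sum fun p hp =>
      Nat.cast_le.2 (Set.ncard_image_le (D.finite_tails p.1 (hV p hp)))
    _ ≤ ∑ _p ∈ G.darts, α * α ^ G.V.card :=
      Finset.sum_le_sum fun p hp => D.ncard_tails_le h3 p.1 (hV p hp)
    _ = G.darts.card * (α * α ^ G.V.card) := by rw [Finset.sum_const, nsmul_eq_mul]

theorem IsCycleIn.mem_polarCycles (hc : IsCycleIn G L)
    (ho : o ∈ ccwCenters (vertexSeq L) L.length)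
    (hone : (crossings (vertexSeq L) L.length o).card = 1) : cycleEdgeSet L ∈ G.polarCycles o := by
  obtain ⟨a, v, M, hav, hM, hlast, heq⟩ := hc.exists_polar_path ho hone
  exact Set.mem_biUnion (PSLG.mem_darts.2 (hc.2.2 _ hav)) ⟨M, ⟨hM, hlast⟩, heq⟩

theorem isOpen_ccwCenters (f : ℕ → Pt) (n : ℕ) : IsOpen (ccwCenters f n) := by
  simp only [ccwCenters, Set.ofPred_forall]
  exact (Set.finite_lt_nat n).isOpen_biInter fun i _ =>
    isOpen_lt continuous_const (continuous_crossp_sub_sub _ _)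

theorem IsCycleIn.mem_ccwCenters_of_ccwPattern_eq {c : Pt} (hc : IsCycleIn G L)
    (ho : o ∈ ccwCenters (vertexSeq L) L.length)
    (h : ccwPattern G.darts c = ccwPattern G.darts o) : c ∈ ccwCenters (vertexSeq L) L.length := by
  rw [mem_ccwCenters_vertexSeq] at ho ⊢
  intro p hp
  have hmem : p ∈ ccwPattern G.darts o :=
    mem_ccwPattern.2 ⟨PSLG.mem_darts.2 (hc.2.2 p hp), ho p hp⟩
  exact (mem_ccwPattern.1 (h ▸ hmem)).2

/- The centre of a star-shaped polygon matters only through the edges that are counterclockwise as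
seen from it, and it may be moved slightly into general position. -/
theorem IsStarShapedPolygon.exists_forall_mem_polarCycles (h : IsStarShapedPolygon G L) :
    ∃ A ∈ ccwPatterns {o | InGeneralPosition G.V o} G.darts,
      ∀ c, ccwPattern G.darts c = A → cycleEdgeSet L ∈ G.polarCycles c := by
  obtain ⟨L', o, hc, hE, hB, ho⟩ := h.exists_ccw
  obtain ⟨o', hV, ho'⟩ :=
    exists_inGeneralPosition G.V ((isOpen_ccwCenters (vertexSeq L') L'.length).mem_nhds ho)
  refine ⟨_, mem_ccwPatterns.2 ⟨o', hV, rfl⟩, fun c hA => ?_⟩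
  have hcc := hc.mem_ccwCenters_of_ccwPattern_eq ho' hA
  exact hE ▸ hc.mem_polarCycles hcc (hc.card_crossings_eq_one hB ho hcc)

theorem starCount_le (h3 : α ^ 3 = α ^ 2 + α + 1) (G : PSLG) : (starCount G : ℝ) ≤
    (1 + G.darts.card + G.darts.card ^ 2) * (G.darts.card * (α * α ^ G.V.card)) := by
  set 𝒜 := ccwPatterns {o | InGeneralPosition G.V o} G.darts
  choose! c hcV hcA using fun A (hA : A ∈ 𝒜) => mem_ccwPatterns.1 hA
  set U := ⋃ A ∈ 𝒜, G.polarCycles (c A)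
  have hU : U.Finite :=
    𝒜.finite_toSet.biUnion fun A hA => PSLG.finite_polarCycles (hcV A hA)
  have hsub : {E' | ∃ L, IsStarShapedPolygon G L ∧ E' = cycleEdgeSet L} ⊆ U := by
    rintro _ ⟨L, hL, rfl⟩
    obtain ⟨A, hA, h⟩ := hL.exists_forall_mem_polarCycles
    exact Set.mem_biUnion hA (h (c A) (hcA A hA))
  calc
    _ ≤ ∑ A ∈ 𝒜, ((G.polarCycles (c A)).ncard : ℝ) :=
      mod_cast (Set.ncard_le_ncard hsub hU).trans (Finset.set_ncard_biUnion_le _ _)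
    _ ≤ ∑ _A ∈ 𝒜, G.darts.card * (α * α ^ G.V.card) :=
      Finset.sum_le_sum fun A hA => PSLG.ncard_polarCycles_le h3 (hcV A hA)
    _ = 𝒜.card * (G.darts.card * (α * α ^ G.V.card)) := by rw [Finset.sum_const, nsmul_eq_mul]
    _ ≤ _ := by
      have hα : 0 < α := by linarith [(tribonacci_bounds h3).1]
      gcongr
      exact_mod_cast card_ccwPatterns_le _ G.darts

end Counting

/-- every PSLG on `n` points contains at most `C·n³·αⁿ` star-shaped polygons. -/
theorem starShaped_upper_bound :
    ∃ C : ℝ, 0 < C ∧ ∀ α : ℝ, 1 < α → α ^ 3 = α ^ 2 + α + 1 →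
      ∀ (n : ℕ) (G : PSLG), G.V.card = n →
        (starCount G : ℝ) ≤ C * n ^ 3 * α ^ n := by
  refine ⟨516, by norm_num, fun α hα h3 n G hn => (starCount_le h3 G).trans ?_⟩
  have hα2 : α ≤ 2 := by linarith [(tribonacci_bounds h3).2]
  have hdarts : (G.darts.card : ℝ) ≤ 6 * n := mod_cast hn ▸ G.card_darts_le
  have h₁ : (n : ℝ) ≤ n ^ 3 := mod_cast Nat.le_self_pow (by norm_num) n
  have h₂ : (n : ℝ) ^ 2 ≤ n ^ 3 := by
    rcases n.eq_zero_or_pos with rfl | hpos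
    · norm_num
    · exact_mod_cast Nat.pow_le_pow_right hpos (by norm_num)
  rw [hn]
  calc
    _ ≤ (1 + 6 * n + (6 * n) ^ 2) * (6 * n * (2 * α ^ n)) := by gcongr
    _ = (12 * n + 72 * n ^ 2 + 432 * n ^ 3) * α ^ n := by ring
    _ ≤ 516 * n ^ 3 * α ^ n := by
      gcongr
      linarith

end
end

section
/- There exists a constant c > 0 such that for every integer ℓ ≥ 1 there is a plane straight-line graph on a set of n = 2^ℓ + 2 points in ℝ² that contains at least c·1.7003ⁿ x-monotone paths. -/
open scoped BigOperators

noncomputable section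

/-
Place the even vertices of `{0, …, n - 1}` on the parabola `y = x ^ 2 + 1` and the odd ones on its
mirror image `y = -(x ^ 2 + 1)`. A chord between vertices of the same parity stays strictly outside
the region `|y| ≤ x ^ 2 + 1`, a step `i → i + 1` strictly inside, and two chords on the same side
meet only if their intervals overlap without being nested. The dyadic arcs `i → i + 2 ^ k` that
start at the first two vertices of a block of length `2 ^ k` are nested, hence drawn without
crossings.

Let `M` bound the numbers of x-monotone paths to the two vertices after a block in terms of those
to its first two vertices. A block of twice the length is made of two such blocks and two longer
arcs, so `M * M + !![1, 0; 1, 1]` does the same for it. Starting from `!![1, 1; 1, 2]` for blocks of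
length 2, the matrix for blocks of length 16 stretches `![22, 39]` by at least
`4881 > 1.7003 ^ 16`.
-/

namespace PSLG

/-- `G.RightEdge a b` is an edge of `G` traversed from left to right; the x-monotone paths of `G`
are the chains of this relation with at least two vertices. -/
def RightEdge (G : PSLG) (a b : Pt) : Prop := s(a, b) ∈ G.E ∧ a.1 < b.1

/-- The x-monotone paths of `G` that end in `v`, including the one-vertex path `[v]`. -/
def xMonPathsTo (G : PSLG) (v : Pt) : Set (List Pt) :=
  {L | L.IsChain G.RightEdge ∧ L.getLast? = some v}

variable {G : PSLG} {u v : Pt} {L : List Pt}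

lemma isXMonotonePath_iff : IsXMonotonePath G L ↔ 2 ≤ L.length ∧ L.IsChain G.RightEdge := by
  change (2 ≤ L.length ∧ L.IsChain fun a b => s(a, b) ∈ G.E) ∧ L.IsChain (fun a b => a.1 < b.1) ↔ _
  simp only [RightEdge, and_assoc, List.isChain_iff_getElem, forall_and]

lemma mem_V_of_isXMonotonePath (hL : IsXMonotonePath G L) (hv : v ∈ L) : v ∈ G.V := by
  obtain ⟨hlen, hchain⟩ := isXMonotonePath_iff.1 hL
  rw [List.isChain_iff_getElem] at hchain
  obtain ⟨k, hk, rfl⟩ := List.mem_iff_getElem.1 hv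
  cases k with
  | zero => exact (G.valid.1 _ _ (hchain 0 hlen).1).1
  | succ k => exact (G.valid.1 _ _ (hchain k hk).1).2.1

lemma nodup_of_isXMonotonePath (hL : IsXMonotonePath G L) : L.Nodup := by
  have : IsTrans Pt fun a b => a.1 < b.1 := ⟨fun _ _ _ => lt_trans⟩
  exact (List.isChain_iff_pairwise.1 hL.2).imp fun hab h => (congrArg Prod.fst h).not_lt hab

lemma finite_setOf_isXMonotonePath (G : PSLG) : {L | IsXMonotonePath G L}.Finite := by
  have hfin : {L : List G.V | L.Nodup}.Finite := Set.finite_coe_iff.1 (inferInstanceAs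
    (Finite {L : List G.V // L.Nodup}))
  refine (hfin.image (List.map Subtype.val)).subset fun L hL => ?_
  have hnodup := nodup_of_isXMonotonePath hL
  lift L to List G.V using fun v hv => mem_V_of_isXMonotonePath hL hv
  exact ⟨L, hnodup.of_map _, rfl⟩

lemma finite_xMonPathsTo (G : PSLG) (v : Pt) : (G.xMonPathsTo v).Finite := by
  refine ((finite_setOf_isXMonotonePath G).insert [v]).subset fun L ⟨hchain, hlast⟩ => ?_
  rcases L with _ | ⟨a, _ | ⟨b, L⟩⟩
  · simp at hlast
  · exact Or.inl (by simpa using hlast)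
  · exact Or.inr (isXMonotonePath_iff.2 ⟨by simp, hchain⟩)

lemma concat_mem_xMonPathsTo (huv : G.RightEdge u v) (hL : L ∈ G.xMonPathsTo u) :
    L ++ [v] ∈ G.xMonPathsTo v := by
  refine ⟨List.isChain_append.2 ⟨hL.1, by simp, ?_⟩, by simp⟩
  simpa [hL.2] using huv

lemma sum_ncard_xMonPathsTo_le {ι : Type*} {s : Finset ι} {f : ι → Pt} (hf : Set.InjOn f s)
    (hs : ∀ i ∈ s, G.RightEdge (f i) v) :
    ∑ i ∈ s, (G.xMonPathsTo (f i)).ncard ≤ (G.xMonPathsTo v).ncard := by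
  have hinj : Function.Injective fun L : List Pt => L ++ [v] := List.append_left_injective [v]
  have hdisj : (s : Set ι).PairwiseDisjoint fun i => (· ++ [v]) '' G.xMonPathsTo (f i) := by
    refine fun i hi j hj hij => (Set.disjoint_image_iff hinj).2 (Set.disjoint_left.2 ?_)
    exact fun L hL hL' => hij (hf hi hj (Option.some_injective _ (hL.2.symm.trans hL'.2)))
  calc ∑ i ∈ s, (G.xMonPathsTo (f i)).ncard
      = ∑ i ∈ s, ((· ++ [v]) '' G.xMonPathsTo (f i)).ncard := by
        simp only [Set.ncard_image_of_injective _ hinj]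
    _ = (⋃ i ∈ s, (· ++ [v]) '' G.xMonPathsTo (f i)).ncard := by
        rw [← finsum_mem_coe_finset]
        exact (s.finite_toSet.ncard_biUnion
          (fun i _ => (finite_xMonPathsTo G (f i)).image _) hdisj).symm
    _ ≤ (G.xMonPathsTo v).ncard := by
        refine Set.ncard_le_ncard (Set.iUnion₂_subset fun i hi => ?_) (finite_xMonPathsTo G v)
        exact Set.image_subset_iff.2 fun L hL => concat_mem_xMonPathsTo (hs i hi) hL

lemma ncard_xMonPathsTo_pos (G : PSLG) (v : Pt) : 0 < (G.xMonPathsTo v).ncard :=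
  (Set.ncard_pos (finite_xMonPathsTo G v)).2 ⟨[v], by simp [xMonPathsTo]⟩

lemma ncard_xMonPathsTo_le_xMonCount (huv : G.RightEdge u v) :
    (G.xMonPathsTo u).ncard ≤ xMonCount G := by
  refine Set.ncard_le_ncard_of_injOn (· ++ [v]) (fun L hL => ?_)
    (List.append_left_injective [v]).injOn (finite_setOf_isXMonotonePath G)
  have hne : L ≠ [] := by rintro rfl; simpa using hL.2
  refine isXMonotonePath_iff.2 ⟨?_, (concat_mem_xMonPathsTo huv hL).1⟩
  simpa [Nat.one_le_iff_ne_zero] using hne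

end PSLG

section Drawing

/-- The `i`-th vertex of the drawing: even indices lie on the parabola `y = x ^ 2 + 1` and odd
ones on its mirror image below the axis. -/
def zigzag (i : ℕ) : Pt := (i, (-1) ^ i * ((i : ℝ) ^ 2 + 1))

/-- A set of arcs `i → j` on `ℕ`, with `i < j`, that can be drawn without crossings on the vertices
`zigzag`: each arc is a step `i → i + 1` or joins indices of the same parity, and two arcs whose
sources have the same parity are disjoint or nested. -/
structure IsNoncrossing (A : ℕ → ℕ → Prop) : Prop where
  lt : ∀ {i j}, A i j → i < j
  step_or_modEq : ∀ {i j}, A i j → j = i + 1 ∨ i ≡ j [MOD 2]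
  nested : ∀ {i j k l}, A i j → A k l → i ≡ k [MOD 2] → i < k → k < j → l ≤ j

variable {A : ℕ → ℕ → Prop} {i j k l : ℕ} {p : Pt}

lemma zigzag_injective : Function.Injective zigzag := fun _ _ h =>
  Nat.cast_injective (congrArg Prod.fst h)

lemma abs_zigzag_snd (i : ℕ) : |(zigzag i).2| = (zigzag i).1 ^ 2 + 1 := by
  rw [zigzag, abs_mul, abs_neg_one_pow, one_mul, abs_of_pos (by positivity)]

lemma neg_one_pow_eq_of_modEq (h : i ≡ j [MOD 2]) : (-1 : ℝ) ^ i = (-1) ^ j := by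
  rw [neg_one_pow_eq_pow_mod_two, h, ← neg_one_pow_eq_pow_mod_two]

lemma fst_mem_Ioo_of_mem_openSegment_zigzag (hij : i < j)
    (hp : p ∈ openSegment ℝ (zigzag i) (zigzag j)) : p.1 ∈ Set.Ioo (i : ℝ) j := by
  rw [← openSegment_eq_Ioo (Nat.cast_lt.2 hij)]
  obtain ⟨a, b, ha, hb, hab, rfl⟩ := hp
  exact ⟨a, b, ha, hb, hab, rfl⟩

lemma snd_eq_of_mem_chord (hmod : i ≡ j [MOD 2])
    (hp : p ∈ openSegment ℝ (zigzag i) (zigzag j)) :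
    p.2 = (-1) ^ i * (p.1 ^ 2 + 1 + (p.1 - i) * (j - p.1)) := by
  obtain ⟨a, b, -, -, hab, rfl⟩ := hp
  obtain rfl : a = 1 - b := by linarith
  simp only [zigzag, Prod.smul_mk, Prod.mk_add_mk, smul_eq_mul, ← neg_one_pow_eq_of_modEq hmod]
  ring

lemma lt_abs_snd_of_mem_chord (hij : i < j) (hmod : i ≡ j [MOD 2])
    (hp : p ∈ openSegment ℝ (zigzag i) (zigzag j)) : p.1 ^ 2 + 1 < |p.2| := by
  obtain ⟨hi, hj⟩ := fst_mem_Ioo_of_mem_openSegment_zigzag hij hp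
  have hpos : 0 < (p.1 - i) * (j - p.1) := mul_pos (sub_pos.2 hi) (sub_pos.2 hj)
  rw [snd_eq_of_mem_chord hmod hp, abs_mul, abs_neg_one_pow, one_mul, abs_of_pos (by positivity)]
  linarith

lemma abs_snd_lt_of_mem_step (hp : p ∈ openSegment ℝ (zigzag i) (zigzag (i + 1))) :
    |p.2| < p.1 ^ 2 + 1 := by
  obtain ⟨a, t, ha, ht, hat, rfl⟩ := hp
  obtain rfl : a = 1 - t := by linarith
  have hsnd : (1 - t) * ((-1) ^ i * ((i : ℝ) ^ 2 + 1))
      + t * ((-1) ^ (i + 1) * (((i : ℝ) + 1) ^ 2 + 1))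
      = (-1) ^ i * ((1 - t) * ((i : ℝ) ^ 2 + 1) - t * (((i : ℝ) + 1) ^ 2 + 1)) := by ring
  simp only [zigzag, Prod.smul_mk, Prod.mk_add_mk, smul_eq_mul, Nat.cast_add, Nat.cast_one, hsnd]
  rw [abs_mul, abs_neg_one_pow, one_mul, abs_lt]
  have hti : 0 ≤ t * i := by positivity
  have hlow : 0 < (1 - t) * (2 * (i : ℝ) ^ 2 + 2 - t) := mul_pos ha (by nlinarith)
  constructor <;> nlinarith

lemma eq_of_mem_openSegment_steps (hp : p ∈ openSegment ℝ (zigzag i) (zigzag (i + 1)))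
    (hp' : p ∈ openSegment ℝ (zigzag k) (zigzag (k + 1))) : i = k := by
  obtain ⟨hi, hi'⟩ := fst_mem_Ioo_of_mem_openSegment_zigzag i.lt_succ_self hp
  obtain ⟨hk, hk'⟩ := fst_mem_Ioo_of_mem_openSegment_zigzag k.lt_succ_self hp'
  have hik : i < k + 1 := by exact_mod_cast hi.trans hk'
  have hki : k < i + 1 := by exact_mod_cast hk.trans hi'
  omega

lemma modEq_of_mem_openSegment_chords (hij : i < j) (hkl : k < l) (hmod : i ≡ j [MOD 2])
    (hmod' : k ≡ l [MOD 2]) (hp : p ∈ openSegment ℝ (zigzag i) (zigzag j))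
    (hp' : p ∈ openSegment ℝ (zigzag k) (zigzag l)) : i ≡ k [MOD 2] := by
  by_contra hik
  have hsign : (-1 : ℝ) ^ k = -(-1) ^ i := by
    have hk : k ≡ i + 1 [MOD 2] := by
      simp only [Nat.ModEq] at hik ⊢
      omega
    rw [neg_one_pow_eq_of_modEq hk, pow_succ, mul_neg_one]
  obtain ⟨hi, hj⟩ := fst_mem_Ioo_of_mem_openSegment_zigzag hij hp
  obtain ⟨hk, hl⟩ := fst_mem_Ioo_of_mem_openSegment_zigzag hkl hp'
  have hA : 0 < (p.1 - i) * (j - p.1) := mul_pos (sub_pos.2 hi) (sub_pos.2 hj)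
  have hB : 0 < (p.1 - k) * (l - p.1) := mul_pos (sub_pos.2 hk) (sub_pos.2 hl)
  have h := (snd_eq_of_mem_chord hmod hp).symm.trans (snd_eq_of_mem_chord hmod' hp')
  rw [hsign, neg_mul, ← mul_neg] at h
  have hneg := mul_left_cancel₀ (pow_ne_zero i (by norm_num)) h
  linarith [sq_nonneg p.1]

lemma sub_mul_sub_eq_of_mem_openSegment_chords (hik : i ≡ k [MOD 2]) (hmod : i ≡ j [MOD 2])
    (hmod' : k ≡ l [MOD 2]) (hp : p ∈ openSegment ℝ (zigzag i) (zigzag j))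
    (hp' : p ∈ openSegment ℝ (zigzag k) (zigzag l)) :
    (p.1 - i) * (j - p.1) = (p.1 - k) * (l - p.1) := by
  have h := (snd_eq_of_mem_chord hmod hp).symm.trans (snd_eq_of_mem_chord hmod' hp')
  rw [neg_one_pow_eq_of_modEq hik] at h
  simpa using h

namespace IsNoncrossing

lemma source_le_of_mem_openSegment_chords (hA : IsNoncrossing A) (hij : A i j) (hkl : A k l)
    (hmod : i ≡ j [MOD 2]) (hmod' : k ≡ l [MOD 2])
    (hp : p ∈ openSegment ℝ (zigzag i) (zigzag j))
    (hp' : p ∈ openSegment ℝ (zigzag k) (zigzag l)) : k ≤ i := by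
  by_contra! hlt
  have hik := modEq_of_mem_openSegment_chords (hA.lt hij) (hA.lt hkl) hmod hmod' hp hp'
  obtain ⟨-, hj⟩ := fst_mem_Ioo_of_mem_openSegment_zigzag (hA.lt hij) hp
  obtain ⟨hk, hl⟩ := fst_mem_Ioo_of_mem_openSegment_zigzag (hA.lt hkl) hp'
  have hlj : (l : ℝ) ≤ j := by
    exact_mod_cast hA.nested hij hkl hik hlt (by exact_mod_cast hk.trans hj)
  have hik' : (i : ℝ) < k := by exact_mod_cast hlt
  refine (sub_mul_sub_eq_of_mem_openSegment_chords hik hmod hmod' hp hp').not_gt ?_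
  exact mul_lt_mul (by linarith) (by linarith) (by linarith) (by linarith)

lemma eq_of_mem_openSegment_chords (hA : IsNoncrossing A) (hij : A i j) (hkl : A k l)
    (hmod : i ≡ j [MOD 2]) (hmod' : k ≡ l [MOD 2])
    (hp : p ∈ openSegment ℝ (zigzag i) (zigzag j))
    (hp' : p ∈ openSegment ℝ (zigzag k) (zigzag l)) : i = k ∧ j = l := by
  obtain rfl : i = k := le_antisymm
    (hA.source_le_of_mem_openSegment_chords hkl hij hmod' hmod hp' hp)
    (hA.source_le_of_mem_openSegment_chords hij hkl hmod hmod' hp hp')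
  obtain ⟨hi, -⟩ := fst_mem_Ioo_of_mem_openSegment_zigzag (hA.lt hij) hp
  have h := mul_left_cancel₀ (sub_pos.2 hi).ne'
    (sub_mul_sub_eq_of_mem_openSegment_chords rfl hmod hmod' hp hp')
  exact ⟨rfl, by simpa using h⟩

lemma eq_of_mem_openSegments (hA : IsNoncrossing A) (hij : A i j) (hkl : A k l)
    (hp : p ∈ openSegment ℝ (zigzag i) (zigzag j))
    (hp' : p ∈ openSegment ℝ (zigzag k) (zigzag l)) : i = k ∧ j = l := by
  rcases hA.step_or_modEq hij with rfl | hmod <;> rcases hA.step_or_modEq hkl with rfl | hmod'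
  · obtain rfl := eq_of_mem_openSegment_steps hp hp'
    exact ⟨rfl, rfl⟩
  · exact ((abs_snd_lt_of_mem_step hp).asymm (lt_abs_snd_of_mem_chord (hA.lt hkl) hmod' hp')).elim
  · exact ((abs_snd_lt_of_mem_step hp').asymm (lt_abs_snd_of_mem_chord (hA.lt hij) hmod hp)).elim
  · exact hA.eq_of_mem_openSegment_chords hij hkl hmod hmod' hp hp'

lemma zigzag_notMem_openSegment (hA : IsNoncrossing A) (hij : A i j) (k : ℕ) :
    zigzag k ∉ openSegment ℝ (zigzag i) (zigzag j) := fun hk => by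
  rcases hA.step_or_modEq hij with rfl | hmod
  · exact (abs_snd_lt_of_mem_step hk).ne (abs_zigzag_snd k)
  · exact (lt_abs_snd_of_mem_chord (hA.lt hij) hmod hk).ne' (abs_zigzag_snd k)

end IsNoncrossing

open Classical in
/-- The edges of the drawing of the arcs `A` on the first `n` indices. -/
def arcEdges (A : ℕ → ℕ → Prop) (n : ℕ) : Finset (Sym2 Pt) :=
  ((Finset.range n ×ˢ Finset.range n).filter fun q => A q.1 q.2).image
    fun q => s(zigzag q.1, zigzag q.2)

lemma mem_arcEdges {n : ℕ} {e : Sym2 Pt} :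
    e ∈ arcEdges A n ↔ ∃ i j, i < n ∧ j < n ∧ A i j ∧ s(zigzag i, zigzag j) = e := by
  simp [arcEdges, and_assoc]

lemma openSegment_eq_of_mk_eq {a b c d : Pt} (h : s(a, b) = s(c, d)) :
    openSegment ℝ a b = openSegment ℝ c d := by
  rcases Sym2.eq_iff.1 h with ⟨rfl, rfl⟩ | ⟨rfl, rfl⟩
  · rfl
  · exact openSegment_symm ℝ _ _

lemma IsNoncrossing.validEdges (hA : IsNoncrossing A) (n : ℕ) :
    ValidEdges ((Finset.range n).map ⟨zigzag, zigzag_injective⟩) (arcEdges A n) := by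
  have hmem {i : ℕ} (hi : i < n) : zigzag i ∈ (Finset.range n).map ⟨zigzag, zigzag_injective⟩ :=
    Finset.mem_map_of_mem _ (Finset.mem_range.2 hi)
  refine ⟨fun a b hab => ?_, fun a b hab v hv => ?_, fun a b c d hab hcd hne => ?_⟩
  · obtain ⟨i, j, hi, hj, hij, he⟩ := mem_arcEdges.1 hab
    have hne := zigzag_injective.ne (hA.lt hij).ne
    rcases Sym2.eq_iff.1 he with ⟨rfl, rfl⟩ | ⟨rfl, rfl⟩
    · exact ⟨hmem hi, hmem hj, hne⟩
    · exact ⟨hmem hj, hmem hi, hne.symm⟩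
  · obtain ⟨i, j, -, -, hij, he⟩ := mem_arcEdges.1 hab
    obtain ⟨k, -, rfl⟩ := Finset.mem_map.1 hv
    rw [← openSegment_eq_of_mk_eq he]
    exact hA.zigzag_notMem_openSegment hij k
  · obtain ⟨i, j, -, -, hij, he⟩ := mem_arcEdges.1 hab
    obtain ⟨k, l, -, -, hkl, he'⟩ := mem_arcEdges.1 hcd
    rw [← openSegment_eq_of_mk_eq he, ← openSegment_eq_of_mk_eq he']
    refine Set.eq_empty_of_forall_notMem fun p ⟨hp, hp'⟩ => hne ?_
    obtain ⟨rfl, rfl⟩ := hA.eq_of_mem_openSegments hij hkl hp hp'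
    exact he.symm.trans he'

/-- The drawing of noncrossing arcs `A` on the first `n` indices, with straight edges. -/
def IsNoncrossing.graph (hA : IsNoncrossing A) (n : ℕ) : PSLG where
  V := (Finset.range n).map ⟨zigzag, zigzag_injective⟩
  E := arcEdges A n
  valid := hA.validEdges n

lemma IsNoncrossing.card_V_graph (hA : IsNoncrossing A) (n : ℕ) : (hA.graph n).V.card = n := by
  simp [graph]

lemma IsNoncrossing.rightEdge_graph (hA : IsNoncrossing A) {n : ℕ} (hij : A i j) (hj : j < n) :
    (hA.graph n).RightEdge (zigzag i) (zigzag j) :=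
  ⟨mem_arcEdges.2 ⟨i, j, (hA.lt hij).trans hj, hj, hij, rfl⟩, Nat.cast_lt.2 (hA.lt hij)⟩

end Drawing

/-- The arcs `i → i + 2 ^ k` whose source is the first or second index of a dyadic block of
length `2 ^ k`. -/
def DyadicArc (i j : ℕ) : Prop := ∃ k, j = i + 2 ^ k ∧ i % 2 ^ k < 2

lemma modEq_mod_two_of_mod_two_pow_lt_two {i k : ℕ} (h : i % 2 ^ k < 2) :
    i ≡ i % 2 [MOD 2 ^ k] := by
  rcases k with _ | k
  · exact Nat.modEq_one
  · have hdvd : i % 2 ^ (k + 1) % 2 = i % 2 := Nat.mod_mod_of_dvd _ (dvd_pow_self 2 k.succ_ne_zero)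
    rw [Nat.mod_eq_of_lt h] at hdvd
    rw [← hdvd]
    exact (Nat.mod_modEq _ _).symm

lemma isNoncrossing_dyadicArc : IsNoncrossing DyadicArc where
  lt := by
    rintro i _ ⟨k, rfl, -⟩
    exact Nat.lt_add_of_pos_right (by positivity)
  step_or_modEq := by
    rintro i _ ⟨_ | k, rfl, -⟩
    · exact Or.inl rfl
    · exact Or.inr (by simp [Nat.ModEq, pow_succ])
  nested := by
    rintro i _ k _ ⟨a, rfl, hi⟩ ⟨b, rfl, hk⟩ hik hlt hlt'
    have hi := modEq_mod_two_of_mod_two_pow_lt_two hi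
    have hk := modEq_mod_two_of_mod_two_pow_lt_two hk
    rw [← show i % 2 = k % 2 from hik] at hk
    rcases le_total a b with hab | hba
    · exact absurd hlt' ((hi.trans (hk.of_dvd (pow_dvd_pow 2 hab)).symm).add_le_of_lt hlt).not_gt
    · have hki : k ≡ i + 2 ^ a [MOD 2 ^ b] :=
        (hk.trans (hi.of_dvd (pow_dvd_pow 2 hba)).symm).trans
          (Nat.modEq_iff_dvd' (Nat.le_add_right i _) |>.2 (by simpa using pow_dvd_pow 2 hba))
      exact hki.add_le_of_lt hlt'

lemma dyadicArc_sub_two_pow {i k m : ℕ} (hi : i % 2 ^ k < 2) (hm : m ≤ k) :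
    DyadicArc (i + 2 ^ k - 2 ^ m) (i + 2 ^ k) := by
  have hle : 2 ^ m ≤ 2 ^ k := Nat.pow_le_pow_right two_pos hm
  have hmod : i + 2 ^ k - 2 ^ m ≡ i [MOD 2 ^ m] := by
    rw [Nat.add_sub_assoc hle]
    exact Nat.add_modEq_left_iff.2 (Nat.dvd_sub (pow_dvd_pow 2 hm) dvd_rfl)
  refine ⟨m, by omega, ?_⟩
  rw [hmod, ← Nat.mod_mod_of_dvd i (pow_dvd_pow 2 hm)]
  exact (Nat.mod_le _ _).trans_lt hi

/-- The number of x-monotone paths to the `j`-th vertex in the graph of the dyadic arcs on `n`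
vertices, the one-vertex path included. -/
def pathCount (n j : ℕ) : ℕ := ((isNoncrossing_dyadicArc.graph n).xMonPathsTo (zigzag j)).ncard

/-- The path counts of the vertices `i` and `i + 1`, on which a dyadic block starts. -/
def pathCounts (n i : ℕ) : Fin 2 → ℕ := ![pathCount n i, pathCount n (i + 1)]

/-- The number of paths to the vertices `i + 2 ^ k` and `i + 2 ^ k + 1` whose last arc has length at
most `2 ^ k`. In the second entry the paths that end with a step from `i + 2 ^ k` are counted by
the first entry, so that their last arc but one is restricted as well. -/
def blockPathCounts (n k i : ℕ) : Fin 2 → ℕ :=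
  ![∑ m ∈ Finset.range (k + 1), pathCount n (i + 2 ^ k - 2 ^ m),
    ∑ m ∈ Finset.range (k + 1), pathCount n (i + 2 ^ k - 2 ^ m) +
      ∑ m ∈ Finset.range k, pathCount n (i + 1 + 2 ^ k - 2 ^ (m + 1))]

open Matrix

/-- The transfer matrix of a dyadic block of length `2 ^ (k + 1)`, which bounds the path counts at
its end from below in terms of those at its start. A block consists of its two halves and its two
longest arcs; `!![1, 0; 1, 1]` accounts for these arcs and for the first of them followed by a
step. -/
def transferMatrix : ℕ → Matrix (Fin 2) (Fin 2) ℕ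
  | 0 => !![1, 1; 1, 2]
  | k + 1 => transferMatrix k * transferMatrix k + !![1, 0; 1, 1]

section Counting

variable {n i k : ℕ}

lemma pathCount_pos (n j : ℕ) : 0 < pathCount n j := PSLG.ncard_xMonPathsTo_pos _ _

lemma sum_pathCount_le (hi : i % 2 ^ k < 2) (hn : i + 2 ^ k < n) :
    ∑ m ∈ Finset.range (k + 1), pathCount n (i + 2 ^ k - 2 ^ m) ≤ pathCount n (i + 2 ^ k) := by
  have harc {m : ℕ} (hm : m ∈ Finset.range (k + 1)) :=
    dyadicArc_sub_two_pow hi (Finset.mem_range_succ_iff.1 hm)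
  refine PSLG.sum_ncard_xMonPathsTo_le (fun a ha b hb hab => ?_) fun m hm =>
    isNoncrossing_dyadicArc.rightEdge_graph (harc hm) hn
  have hle {m : ℕ} (hm : m ∈ Finset.range (k + 1)) : 2 ^ m ≤ i + 2 ^ k :=
    (Nat.pow_le_pow_right two_pos (Finset.mem_range_succ_iff.1 hm)).trans (Nat.le_add_left _ _)
  exact Nat.pow_right_injective le_rfl
    ((tsub_right_inj (hle ha) (hle hb)).1 (zigzag_injective hab))

lemma blockPathCounts_le_pathCounts (hi : 2 ^ k ∣ i) (hn : i + 2 ^ k + 1 < n) :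
    blockPathCounts n k i ≤ pathCounts n (i + 2 ^ k) := by
  have hmod : i % 2 ^ k = 0 := Nat.mod_eq_zero_of_dvd hi
  have hmod' : (i + 1) % 2 ^ k < 2 := by
    rw [Nat.add_mod, hmod, zero_add, Nat.mod_mod]
    exact (Nat.mod_le _ _).trans_lt one_lt_two
  have hfst := sum_pathCount_le (hmod.trans_lt two_pos) (Nat.lt_of_succ_lt hn)
  have hsnd := sum_pathCount_le hmod' (by omega : i + 1 + 2 ^ k < n)
  rw [Finset.sum_range_succ', pow_zero, Nat.add_right_comm i 1, Nat.add_sub_cancel] at hsnd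
  refine Pi.le_def.2 (Fin.forall_fin_two.2 ⟨hfst, ?_⟩)
  calc blockPathCounts n k i 1
      ≤ pathCount n (i + 2 ^ k) +
          ∑ m ∈ Finset.range k, pathCount n (i + 1 + 2 ^ k - 2 ^ (m + 1)) :=
        Nat.add_le_add_right hfst _
    _ ≤ pathCount n (i + 2 ^ k + 1) := by
        rwa [add_comm, Nat.add_right_comm i 1]

lemma blockPathCounts_succ (n k i : ℕ) :
    blockPathCounts n (k + 1) i =
      blockPathCounts n k (i + 2 ^ k) + !![1, 0; 1, 1] *ᵥ pathCounts n i := by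
  have hfst : i + 2 ^ k + 2 ^ k = i + 2 ^ (k + 1) := by ring
  have hsnd : i + 2 ^ k + 1 + 2 ^ k = i + 1 + 2 ^ (k + 1) := by ring
  have hmulVec : !![1, 0; 1, 1] *ᵥ pathCounts n i
      = ![pathCount n i, pathCount n i + pathCount n (i + 1)] := by
    simp [pathCounts, -mulVec_cons, cons_mulVec]
  rw [hmulVec]
  simp only [blockPathCounts, Finset.sum_range_succ, hfst, hsnd, Nat.add_sub_cancel, cons_add_cons,
    empty_add_empty]
  exact vec2_eq rfl (by ring)

lemma transferMatrix_mulVec_mono (k : ℕ) : Monotone (transferMatrix k *ᵥ ·) :=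
  fun _ _ h _ => dotProduct_le_dotProduct_of_nonneg_left h fun _ => Nat.zero_le _

lemma transferMatrix_mulVec_le_blockPathCounts (hi : 2 ^ (k + 1) ∣ i)
    (hn : i + 2 ^ (k + 1) + 1 < n) :
    transferMatrix k *ᵥ pathCounts n i ≤ blockPathCounts n (k + 1) i := by
  induction k generalizing i with
  | zero =>
    have hblock : blockPathCounts n 1 i = ![pathCount n (i + 1) + pathCount n i,
        pathCount n (i + 1) + pathCount n i + pathCount n (i + 1)] := by
      simp [blockPathCounts, Finset.sum_range_succ]
    have hmulVec : transferMatrix 0 *ᵥ pathCounts n i = ![pathCount n i + pathCount n (i + 1),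
        pathCount n i + 2 * pathCount n (i + 1)] := by
      simp [transferMatrix, pathCounts, -mulVec_cons, cons_mulVec]
    rw [hblock, hmulVec]
    exact (vec2_eq (add_comm _ _) (by ring)).le
  | succ k ih =>
    have hdvd : 2 ^ (k + 1) ∣ i := (pow_dvd_pow 2 (Nat.le_succ _)).trans hi
    rw [pow_succ, mul_two, ← add_assoc] at hn
    have hn' : i + 2 ^ (k + 1) + 1 < n := by omega
    have hhalf : transferMatrix k *ᵥ pathCounts n i ≤ pathCounts n (i + 2 ^ (k + 1)) :=
      (ih hdvd hn').trans (blockPathCounts_le_pathCounts hdvd hn')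
    calc transferMatrix (k + 1) *ᵥ pathCounts n i
        = transferMatrix k *ᵥ (transferMatrix k *ᵥ pathCounts n i)
            + !![1, 0; 1, 1] *ᵥ pathCounts n i := by
          rw [transferMatrix, add_mulVec, mulVec_mulVec]
      _ ≤ transferMatrix k *ᵥ pathCounts n (i + 2 ^ (k + 1))
            + !![1, 0; 1, 1] *ᵥ pathCounts n i :=
          add_le_add_left (transferMatrix_mulVec_mono k hhalf) _
      _ ≤ blockPathCounts n (k + 1) (i + 2 ^ (k + 1)) + !![1, 0; 1, 1] *ᵥ pathCounts n i :=
          add_le_add_left (ih (hdvd.add dvd_rfl) hn) _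
      _ = blockPathCounts n (k + 2) i := (blockPathCounts_succ n (k + 1) i).symm

lemma transferMatrix_mulVec_le_pathCounts (hi : 2 ^ (k + 1) ∣ i) (hn : i + 2 ^ (k + 1) + 1 < n) :
    transferMatrix k *ᵥ pathCounts n i ≤ pathCounts n (i + 2 ^ (k + 1)) :=
  (transferMatrix_mulVec_le_blockPathCounts hi hn).trans (blockPathCounts_le_pathCounts hi hn)

lemma pow_smul_le_smul_pathCounts {q c : ℕ} {u : Fin 2 → ℕ}
    (hu : q • u ≤ transferMatrix k *ᵥ u) (h_zero : u ≤ c • pathCounts n 0) (a : ℕ)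
    (hn : 2 ^ (k + 1) * a + 1 < n) : q ^ a • u ≤ c • pathCounts n (2 ^ (k + 1) * a) := by
  induction a with
  | zero => simpa using h_zero
  | succ a ih =>
    rw [Nat.mul_succ] at hn
    calc q ^ (a + 1) • u = q ^ a • q • u := by rw [pow_succ, mul_smul]
      _ ≤ q ^ a • (transferMatrix k *ᵥ u) := smul_le_smul_of_nonneg_left hu (Nat.zero_le _)
      _ = transferMatrix k *ᵥ (q ^ a • u) := (mulVec_smul _ _ _).symm
      _ ≤ transferMatrix k *ᵥ (c • pathCounts n (2 ^ (k + 1) * a)) :=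
          transferMatrix_mulVec_mono k (ih (by lia))
      _ = c • (transferMatrix k *ᵥ pathCounts n (2 ^ (k + 1) * a)) := mulVec_smul _ _ _
      _ ≤ c • pathCounts n (2 ^ (k + 1) * (a + 1)) := smul_le_smul_of_nonneg_left
          (transferMatrix_mulVec_le_pathCounts (dvd_mul_right _ _) hn) (Nat.zero_le _)

lemma pow_le_pathCount {a : ℕ} (hn : 16 * a + 1 < n) :
    22 * 4881 ^ a ≤ 39 * pathCount n (16 * a) := by
  -- The spectral radius of this matrix is about 4883, with an eigenvector close to `![22, 39]`.
  have hmatrix : transferMatrix 3 = !![1484, 1917; 2628, 3401] := by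
    simp [transferMatrix]
  have hu : 4881 • ![22, 39] ≤ transferMatrix 3 *ᵥ ![22, 39] := by
    rw [hmatrix]
    simp [Pi.le_def, Fin.forall_fin_two]
  have h_zero : ![22, 39] ≤ 39 • pathCounts n 0 := by
    have := pathCount_pos n 0
    have := pathCount_pos n 1
    refine Pi.le_def.2 (Fin.forall_fin_two.2 ⟨?_, ?_⟩)
    · change 22 ≤ 39 * pathCount n 0
      omega
    · change 39 ≤ 39 * pathCount n 1
      omega
  have h := pow_smul_le_smul_pathCounts hu h_zero a hn 0
  simpa [pathCounts, mul_comm] using h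

lemma pathCount_le_xMonCount {j : ℕ} (hj : j + 1 < n) :
    pathCount n j ≤ xMonCount (isNoncrossing_dyadicArc.graph n) :=
  PSLG.ncard_xMonPathsTo_le_xMonCount
    (isNoncrossing_dyadicArc.rightEdge_graph ⟨0, rfl, by simp [Nat.mod_one]⟩ hj)

end Counting

theorem xMonotone_lower_bound_general :
    ∃ c : ℝ, 0 < c ∧ ∀ n : ℕ, 2 ≤ n →
      ∃ G : PSLG, G.V.card = n ∧ c * (1.7003 : ℝ) ^ n ≤ (xMonCount G : ℝ) := by
  refine ⟨22 / 39 / 1.7003 ^ 17, by positivity, fun n hn => ?_⟩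
  refine ⟨isNoncrossing_dyadicArc.graph n, isNoncrossing_dyadicArc.card_V_graph n, ?_⟩
  obtain ⟨a, hlow, hhigh⟩ : ∃ a, 16 * a + 1 < n ∧ n ≤ 16 * a + 17 :=
    ⟨(n - 2) / 16, by omega, by omega⟩
  have hpath : 22 * 4881 ^ a ≤ 39 * (pathCount n (16 * a) : ℝ) := by
    exact_mod_cast pow_le_pathCount hlow
  have hcount : (pathCount n (16 * a) : ℝ) ≤ xMonCount (isNoncrossing_dyadicArc.graph n) := by
    exact_mod_cast pathCount_le_xMonCount hlow
  have hpow : (1.7003 : ℝ) ^ n ≤ 4881 ^ a * 1.7003 ^ 17 :=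
    calc (1.7003 : ℝ) ^ n ≤ 1.7003 ^ (16 * a + 17) := pow_le_pow_right₀ (by norm_num) hhigh
      _ = (1.7003 ^ 16) ^ a * 1.7003 ^ 17 := by rw [pow_add, pow_mul]
      _ ≤ 4881 ^ a * 1.7003 ^ 17 := by gcongr; norm_num
  calc 22 / 39 / 1.7003 ^ 17 * (1.7003 : ℝ) ^ n
      ≤ 22 / 39 / 1.7003 ^ 17 * (4881 ^ a * 1.7003 ^ 17) := by gcongr
    _ = 22 / 39 * 4881 ^ a := by field_simp
    _ ≤ pathCount n (16 * a) := by linarith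
    _ ≤ xMonCount (isNoncrossing_dyadicArc.graph n) := hcount

/-- for every `ℓ ≥ 1` there is a PSLG on `n = 2^ℓ + 2` points with at
least `c·1.7003ⁿ` x-monotone paths, for an absolute constant `c > 0`. -/
theorem xMonotone_lower_bound :
    ∃ c : ℝ, 0 < c ∧ ∀ ℓ : ℕ, 1 ≤ ℓ →
      ∃ G : PSLG, G.V.card = 2 ^ ℓ + 2 ∧
        c * (1.7003 : ℝ) ^ (2 ^ ℓ + 2) ≤ (xMonCount G : ℝ) := by
  obtain ⟨c, hc, h⟩ := xMonotone_lower_bound_general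
  exact ⟨c, hc, fun ℓ _ => h (2 ^ ℓ + 2) (Nat.le_add_left 2 _)⟩

end
end
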